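/- There is an absolute constant c > 0 such that for every integer t ≥ 1, every graph G with no K_t minor, and every ball hypergraph 𝓗 of G, τ(𝓗) ≤ c·t²·√(log t)·ν(𝓗)·log(t·ν(𝓗)), where log is the natural logarithm. -/

import Mathlib

/-- The ball of radius `r` centered at `v` in the graph metric of `G`:
all vertices `u` with `d_G(v,u) ≤ r` (in particular, `u` must be reachable from `v`). -/
def SimpleGraph.gBall {V : Type*} (G : SimpleGraph V) (v : V) (r : ℕ) : Set V :=
  {u | G.Reachable v u ∧ G.dist v u ≤ r}

/-- A ball hypergraph of `G` is given by its edge set `E`: a collection of subsets of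
`V(G)`, each of which is a ball of `G`. -/
def IsBallHypergraph {V : Type*} (G : SimpleGraph V) (E : Set (Set V)) : Prop :=
  ∀ e ∈ E, ∃ v r, e = G.gBall v r

/-- `H` is a minor of `G`: there are pairwise disjoint connected nonempty branch sets
in `G`, one for each vertex of `H`, with an edge of `G` between the branch sets of any
two adjacent vertices of `H`. -/
def GraphMinor {W : Type*} {V : Type*} (H : SimpleGraph W) (G : SimpleGraph V) : Prop :=
  ∃ f : W → Set V,
    (∀ w, (G.induce (f w)).Connected) ∧
    (Pairwise fun w₁ w₂ => Disjoint (f w₁) (f w₂)) ∧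
    (∀ w₁ w₂, H.Adj w₁ w₂ → ∃ u ∈ f w₁, ∃ v ∈ f w₂, G.Adj u v)

/-- The matching number of the hypergraph with edge set `E`: the maximum number of
pairwise disjoint edges. -/
noncomputable def matchingNumber {V : Type*} [Fintype V] (E : Set (Set V)) : ℕ :=
  sSup {n | ∃ M : Finset (Set V), ↑M ⊆ E ∧ (M : Set (Set V)).Pairwise Disjoint ∧ M.card = n}

/-- The transversal number of the hypergraph with edge set `E`: the minimum size of a
set of vertices meeting every edge. -/
noncomputable def transversalNumber {V : Type*} [Fintype V] (E : Set (Set V)) : ℕ :=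
  sInf {n | ∃ T : Finset V, (∀ e ∈ E, ∃ v ∈ T, v ∈ e) ∧ T.card = n}

/-!
Deleting the edges that contain another edge changes neither `τ` nor `ν`, so the edges may be taken
to form an antichain of balls. Then additively weighted Voronoi cells of the centres show that, for
any subfamily `S`, the graph joining two balls of `S` that share a point lying in no other ball of
`S` is a minor of `G`. By Mader's contraction argument and the theorem of Kostochka and Thomason it
has `O(t √(log t))` edges per vertex.

Given a fractional matching, sampling balls with probabilities proportional to their weights
(Clarkson and Shor) turns this into a sparsity bound for the intersecting pairs of balls, and a
Turán-type deletion argument extracts a matching smaller by a factor of only `O(t √(log t))`. By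
minimax duality there is a fractional transversal of total weight `T = O(t √(log t) ν)`.

The Voronoi cells of a set shattered by balls are the branch sets of a complete minor, so the balls
have VC dimension at most `t`. An ε-net for the fractional transversal, with `ε = 1 / T`, is a
transversal of size `O(T t log T)`.
-/

section Connectivity

variable {V : Type*} {G : SimpleGraph V}

theorem connected_induce_iUnion {U : Type*} {K : SimpleGraph U} {g : U → Set V}
    (hK : K.Connected) (hg : ∀ x, (G.induce (g x)).Connected)
    (hadj : ∀ x y, K.Adj x y → ∃ u ∈ g x, ∃ v ∈ g y, G.Adj u v) :
    (G.induce (⋃ x, g x)).Connected := by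
  have within (x : U) {u v : V} (hu : u ∈ g x) (hv : v ∈ g x) :
      (G.induce (⋃ x, g x)).Reachable ⟨u, Set.mem_iUnion_of_mem x hu⟩
        ⟨v, Set.mem_iUnion_of_mem x hv⟩ :=
    ((hg x).preconnected ⟨u, hu⟩ ⟨v, hv⟩).map
      (SimpleGraph.induceHomOfLE G (Set.subset_iUnion g x)).toHom
  have along {x y : U} (p : K.Walk x y) : ∀ {u v : V} (hu : u ∈ g x) (hv : v ∈ g y),
      (G.induce (⋃ x, g x)).Reachable ⟨u, Set.mem_iUnion_of_mem x hu⟩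
        ⟨v, Set.mem_iUnion_of_mem y hv⟩ := by
    induction p with
    | nil => exact within _
    | @cons x y _ hxy _ ih =>
      intro u v hu hv
      obtain ⟨a, ha, b, hb, hab⟩ := hadj x y hxy
      have step : (G.induce (⋃ x, g x)).Adj ⟨a, Set.mem_iUnion_of_mem x ha⟩
        ⟨b, Set.mem_iUnion_of_mem y hb⟩ := hab
      exact ((within x hu ha).trans step.reachable).trans (ih hb hv)
  obtain ⟨x₀⟩ := hK.nonempty
  obtain ⟨u₀, hu₀⟩ := (hg x₀).nonempty
  refine (SimpleGraph.connected_iff _).2 ⟨?_, ⟨u₀, Set.mem_iUnion_of_mem x₀ hu₀⟩⟩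
  refine fun ⟨u, hu⟩ ⟨v, hv⟩ => ?_
  obtain ⟨x, hx⟩ := Set.mem_iUnion.1 hu
  obtain ⟨y, hy⟩ := Set.mem_iUnion.1 hv
  exact along (hK.preconnected x y).some hx hy

theorem connected_induce_of_descent {α : Type*} [Preorder α] [WellFoundedLT α] {s : Set V} {p : V}
    (rank : V → α) (hp : p ∈ s)
    (descend : ∀ y ∈ s, y ≠ p → ∃ z ∈ s, G.Adj y z ∧ rank z < rank y) :
    (G.induce s).Connected := by
  refine (SimpleGraph.connected_iff_exists_forall_reachable _).2 ⟨⟨p, hp⟩, fun ⟨y, hy⟩ => ?_⟩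
  induction hr : rank y using WellFoundedLT.induction generalizing y with
  | ind r ih =>
    obtain rfl | hyp := eq_or_ne y p
    · rfl
    obtain ⟨z, hz, hyz, hlt⟩ := descend y hy hyp
    have step : (G.induce s).Adj ⟨z, hz⟩ ⟨y, hy⟩ := hyz.symm
    exact (ih _ (hr ▸ hlt) z hz rfl).trans step.reachable

end Connectivity

namespace GraphMinor

variable {U V W : Type*} {H : SimpleGraph W} {K : SimpleGraph U} {G : SimpleGraph V}

theorem of_isContained (h : H.IsContained G) : GraphMinor H G := by
  obtain ⟨f⟩ := h
  refine ⟨fun w => {f w}, fun w => .of_subsingleton, fun a b hab => ?_, fun a b hab => ?_⟩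
  · exact Set.disjoint_singleton.2 (f.injective.ne hab)
  · exact ⟨f a, rfl, f b, rfl, f.toHom.map_adj hab⟩

theorem of_subsingleton [Subsingleton W] [Nonempty V] (H : SimpleGraph W) (G : SimpleGraph V) :
    GraphMinor H G := by
  obtain ⟨v⟩ := ‹Nonempty V›
  exact ⟨fun _ => {v}, fun _ => .of_subsingleton, fun a b hab => (hab (Subsingleton.elim a b)).elim,
    fun a b hab => (hab.ne (Subsingleton.elim a b)).elim⟩

theorem trans (h₁ : GraphMinor H K) (h₂ : GraphMinor K G) : GraphMinor H G := by
  obtain ⟨f, f_conn, f_disj, f_adj⟩ := h₁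
  obtain ⟨g, g_conn, g_disj, g_adj⟩ := h₂
  refine ⟨fun w => ⋃ x : f w, g x, fun w => ?_, fun a b hab => ?_, fun a b hab => ?_⟩
  · exact connected_induce_iUnion (f_conn w) (fun x => g_conn x) fun x y hxy => g_adj x y hxy
  · simp only [Set.disjoint_iUnion_left, Set.disjoint_iUnion_right]
    exact fun x y => g_disj fun hxy => Set.disjoint_left.1 (f_disj hab) y.2 (hxy ▸ x.2)
  · obtain ⟨x, hx, y, hy, hxy⟩ := f_adj a b hab
    obtain ⟨u, hu, v, hv, huv⟩ := g_adj x y hxy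
    exact ⟨u, Set.mem_iUnion_of_mem ⟨x, hx⟩ hu, v, Set.mem_iUnion_of_mem ⟨y, hy⟩ hv, huv⟩

end GraphMinor

section Voronoi

variable {V ι : Type*} (G : SimpleGraph V) (a : ι → ℕ) (p : ι → V)

/-- The additively weighted distance of `y` from the site `p i`, infinite across components. -/
noncomputable def siteDist (i : ι) (y : V) : ℕ∞ := a i + G.edist (p i) y

/-- The additively weighted Voronoi cell of the site `p i`: the vertices for which `p i` is the
closest site. Ties are broken by the order of the indices. -/
def voronoiCell [LinearOrder ι] (i : ι) : Set V :=
  {y | siteDist G a p i y ≠ ⊤ ∧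
    ∀ j, toLex (siteDist G a p i y, i) ≤ toLex (siteDist G a p j y, j)}

variable {G a p}

theorem siteDist_le_add_one (j : ι) {y z : V} (h : G.Adj y z) :
    siteDist G a p j y ≤ siteDist G a p j z + 1 := by
  rw [siteDist, siteDist, add_assoc]
  gcongr
  exact (SimpleGraph.edist_triangle (v := z)).trans_eq
    (congrArg _ (SimpleGraph.edist_eq_one_iff_adj.2 h.symm))

theorem exists_adj_siteDist_add_one {i : ι} {y : V} (hfin : siteDist G a p i y ≠ ⊤)
    (hy : y ≠ p i) : ∃ z, G.Adj y z ∧ siteDist G a p i z + 1 = siteDist G a p i y := by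
  have hreach : G.edist y (p i) ≠ ⊤ := by
    rw [SimpleGraph.edist_comm]
    exact fun h => hfin (by rw [siteDist, h, add_top])
  obtain ⟨walk, hwalk⟩ := SimpleGraph.exists_walk_of_edist_ne_top hreach
  cases walk with
  | nil => exact (hy rfl).elim
  | @cons _ z _ hyz tail =>
    refine ⟨z, hyz, le_antisymm ?_ (siteDist_le_add_one i hyz)⟩
    rw [siteDist, siteDist, add_assoc, G.edist_comm (u := p i) (v := y), ← hwalk,
      SimpleGraph.Walk.length_cons, Nat.cast_succ, SimpleGraph.edist_comm]
    gcongr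
    exact SimpleGraph.edist_le tail

-- A step towards `p i` decreases the distance to `p i` by one and any other distance by at most
-- one, so no site overtakes `p i`.
theorem siteDist_lt_of_step {i j : ι} {y z : V} (hyz : G.Adj y z)
    (hz : siteDist G a p i z + 1 = siteDist G a p i y)
    (hij : siteDist G a p i y < siteDist G a p j y) :
    siteDist G a p i z < siteDist G a p j z :=
  lt_of_add_lt_add_right (hz.trans_lt (hij.trans_le (siteDist_le_add_one j hyz)))

section LinearOrder

variable [LinearOrder ι]

theorem toLex_siteDist_le_of_step {i j : ι} {y z : V} (hyz : G.Adj y z)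
    (hz : siteDist G a p i z + 1 = siteDist G a p i y)
    (hij : toLex (siteDist G a p i y, i) ≤ toLex (siteDist G a p j y, j)) :
    toLex (siteDist G a p i z, i) ≤ toLex (siteDist G a p j z, j) := by
  rw [Prod.Lex.toLex_le_toLex] at hij ⊢
  obtain hlt | ⟨heq, hle⟩ := hij
  · exact .inl (siteDist_lt_of_step hyz hz hlt)
  · have : siteDist G a p i z + 1 ≤ siteDist G a p j z + 1 :=
      (hz.trans heq).trans_le (siteDist_le_add_one j hyz)
    exact (ENat.add_le_add_iff_right ENat.one_ne_top |>.1 this).lt_or_eq.imp_right (⟨·, hle⟩)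

theorem pairwise_disjoint_voronoiCell :
    Pairwise fun i j => Disjoint (voronoiCell G a p i) (voronoiCell G a p j) := by
  refine fun i j hij => Set.disjoint_left.2 fun y hi hj => hij ?_
  exact congrArg (fun q => (ofLex q).2) (le_antisymm (hi.2 j) (hj.2 i))

theorem site_mem_voronoiCell {i : ι} (own : ∀ j ≠ i, a i < a j + G.edist (p j) (p i)) :
    p i ∈ voronoiCell G a p i := by
  refine ⟨by simp [siteDist], fun j => ?_⟩
  obtain rfl | hji := eq_or_ne j i
  · rfl
  · exact Prod.Lex.toLex_le_toLex.2 (.inl (by simpa [siteDist] using own j hji))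

theorem connected_induce_voronoiCell {i : ι} (hi : p i ∈ voronoiCell G a p i) :
    (G.induce (voronoiCell G a p i)).Connected := by
  refine connected_induce_of_descent (siteDist G a p i) hi fun y hy hne => ?_
  obtain ⟨z, hyz, hz⟩ := exists_adj_siteDist_add_one hy.1 hne
  have hfin : siteDist G a p i z ≠ ⊤ := fun h => hy.1 (by rw [← hz, h, top_add])
  refine ⟨z, ⟨hfin, fun j => toLex_siteDist_le_of_step hyz hz (hy.2 j)⟩, hyz, ?_⟩
  exact hz ▸ ENat.lt_add_one_iff hfin |>.2 le_rfl

theorem mem_voronoiCell_of_le {i j : ι} {y : V} (hfin : siteDist G a p i y ≠ ⊤)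
    (hij : toLex (siteDist G a p i y, i) ≤ toLex (siteDist G a p j y, j))
    (hothers : ∀ k, k ≠ i → k ≠ j → siteDist G a p i y < siteDist G a p k y) :
    y ∈ voronoiCell G a p i := by
  refine ⟨hfin, fun k => ?_⟩
  obtain rfl | hki := eq_or_ne k i
  · rfl
  obtain rfl | hkj := eq_or_ne k j
  · exact hij
  · exact Prod.Lex.toLex_le_toLex.2 (.inl (hothers k hki hkj))

-- Walk from `y` towards `p i`: the first vertex that leaves the cell of `j` lies in that of `i`.
theorem exists_adj_voronoiCell {i j : ι} (hi : p i ∈ voronoiCell G a p i) (hij : i ≠ j) {y : V}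
    (hy : y ∈ voronoiCell G a p j) (hfin : siteDist G a p i y ≠ ⊤)
    (hothers : ∀ k, k ≠ i → k ≠ j → siteDist G a p i y < siteDist G a p k y) :
    ∃ u ∈ voronoiCell G a p i, ∃ v ∈ voronoiCell G a p j, G.Adj u v := by
  induction hr : siteDist G a p i y using WellFoundedLT.induction generalizing y with
  | ind r ih =>
    have hne : y ≠ p i := by
      rintro rfl
      exact Set.disjoint_left.1 (pairwise_disjoint_voronoiCell hij) hi hy
    obtain ⟨z, hyz, hz⟩ := exists_adj_siteDist_add_one hfin hne
    have hfinz : siteDist G a p i z ≠ ⊤ := fun h => hfin (by rw [← hz, h, top_add])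
    have hothersz (k) (hki : k ≠ i) (hkj : k ≠ j) : siteDist G a p i z < siteDist G a p k z :=
      siteDist_lt_of_step hyz hz (hothers k hki hkj)
    obtain hle | hlt := le_or_gt (toLex (siteDist G a p i z, i)) (toLex (siteDist G a p j z, j))
    · exact ⟨z, mem_voronoiCell_of_le hfinz hle hothersz, y, hy, hyz.symm⟩
    · have hji : siteDist G a p j z ≤ siteDist G a p i z := by
        obtain h | h := Prod.Lex.toLex_lt_toLex.1 hlt
        exacts [h.le, h.1.le]
      have hzj : z ∈ voronoiCell G a p j :=
        mem_voronoiCell_of_le (ne_top_of_le_ne_top hfinz hji) hlt.le fun k hkj hki =>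
          hji.trans_lt (hothersz k hki hkj)
      exact ih _ (hr ▸ hz ▸ ENat.lt_add_one_iff hfinz |>.2 le_rfl) hzj hfinz hothersz rfl

end LinearOrder

theorem graphMinor_of_voronoi {H : SimpleGraph ι}
    (own : ∀ i j, j ≠ i → a i < a j + G.edist (p j) (p i))
    (witness : ∀ i j, H.Adj i j → ∃ y, siteDist G a p i y ≠ ⊤ ∧ siteDist G a p j y ≠ ⊤ ∧
      ∀ k, k ≠ i → k ≠ j →
        siteDist G a p i y < siteDist G a p k y ∧ siteDist G a p j y < siteDist G a p k y) :
    GraphMinor H G := by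
  classical
  let _ : LinearOrder ι := linearOrderOfSTO WellOrderingRel
  have site_mem (i : ι) : p i ∈ voronoiCell G a p i := site_mem_voronoiCell (own i)
  refine ⟨voronoiCell G a p, fun i => connected_induce_voronoiCell (site_mem i),
    pairwise_disjoint_voronoiCell, fun i j hij => ?_⟩
  obtain ⟨y, hi, hj, hothers⟩ := witness i j hij
  obtain hji | hij' :=
    le_total (toLex (siteDist G a p j y, j)) (toLex (siteDist G a p i y, i))
  · exact exists_adj_voronoiCell (site_mem i) hij.ne
      (mem_voronoiCell_of_le hj hji fun k hkj hki => (hothers k hki hkj).2) hi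
      fun k hki hkj => (hothers k hki hkj).1
  · obtain ⟨v, hv, u, hu, huv⟩ := exists_adj_voronoiCell (site_mem j) hij.ne'
      (mem_voronoiCell_of_le hi hij' fun k hki hkj => (hothers k hki hkj).1) hj
      fun k hkj hki => (hothers k hki hkj).2
    exact ⟨u, hu, v, hv, huv.symm⟩

end Voronoi

section Balls

variable {V ι : Type*} {G : SimpleGraph V}

theorem mem_gBall_iff_edist_le {u v : V} {r : ℕ} : u ∈ G.gBall v r ↔ G.edist v u ≤ r := by
  refine ⟨fun ⟨hreach, hdist⟩ => ?_, fun h => ?_⟩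
  · rw [← hreach.coe_dist_eq_edist]
    exact_mod_cast hdist
  · have hreach : G.Reachable v u :=
      SimpleGraph.edist_ne_top_iff_reachable.1 (ne_top_of_le_ne_top (ENat.natCast_ne_top r) h)
    refine ⟨hreach, ?_⟩
    rw [← hreach.coe_dist_eq_edist] at h
    exact_mod_cast h

/-- The graph on the members of `S` in which `i` and `j` are adjacent when some point lies in `B i`
and `B j` and in no other set indexed by `S`. Indices outside `S` are isolated. -/
def crossGraph (B : ι → Set V) (S : Finset ι) : SimpleGraph ι where
  Adj i j := i ≠ j ∧ i ∈ S ∧ j ∈ S ∧ ∃ x ∈ B i ∩ B j, ∀ k ∈ S, x ∈ B k → k = i ∨ k = j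
  symm := ⟨fun _ _ ⟨hij, hi, hj, x, hx, hother⟩ =>
    ⟨hij.symm, hj, hi, x, hx.symm, fun k hk hxk => (hother k hk hxk).symm⟩⟩
  loopless := ⟨fun _ h => h.1 rfl⟩

-- With weights `R - r i`, a point lies in `B i` exactly when its distance from site `i` is at
-- most `R`. Hence a site owning another site would have the larger ball.
theorem graphMinor_crossGraph {B : ι → Set V} (hball : ∀ i, ∃ v r, B i = G.gBall v r)
    (hanti : ∀ i j, B i ⊆ B j → i = j) (S : Finset ι) :
    GraphMinor ((crossGraph B S).induce S) G := by
  choose p r hB using hball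
  let R := S.sup r
  let dist : ↥(S : Set ι) → V → ℕ∞ := siteDist G (fun i => R - r i) (fun i => p i)
  have mem_iff (i : ↥(S : Set ι)) (y : V) : y ∈ B i ↔ dist i y ≤ R := by
    have hr : r i ≤ R := Finset.le_sup i.2
    have hsplit : (R : ℕ∞) = ↑(R - r i) + ↑(r i) := by exact_mod_cast (Nat.sub_add_cancel hr).symm
    rw [hB, mem_gBall_iff_edist_le, hsplit]
    exact (ENat.add_le_add_iff_left (ENat.natCast_ne_top _)).symm
  refine graphMinor_of_voronoi (a := fun i : ↥(S : Set ι) => R - r i) (p := fun i => p i)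
    (fun i j hji => ?_) fun i j hij => ?_
  · by_contra! hle
    refine hji (Subtype.ext (hanti i j fun y hy => (mem_iff j y).2 ?_)).symm
    calc dist j y
        ≤ ↑(R - r j) + (G.edist (p j) (p i) + G.edist (p i) y) :=
          add_le_add_right (SimpleGraph.edist_triangle ..) _
      _ ≤ dist i y := by
          rw [← add_assoc]
          exact add_le_add_left hle _
      _ ≤ R := (mem_iff i y).1 hy
  · obtain ⟨_, _, _, x, ⟨hxi, hxj⟩, hother⟩ := hij
    have hi : dist i x ≤ R := (mem_iff i x).1 hxi
    have hj : dist j x ≤ R := (mem_iff j x).1 hxj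
    refine ⟨x, ne_top_of_le_ne_top (ENat.natCast_ne_top R) hi,
      ne_top_of_le_ne_top (ENat.natCast_ne_top R) hj, fun k hki hkj => ?_⟩
    have hk : R < dist k x := by
      by_contra! hk
      exact (hother k k.2 ((mem_iff k x).2 hk)).elim (hki <| Subtype.ext ·) (hkj <| Subtype.ext ·)
    exact ⟨hi.trans_lt hk, hj.trans_lt hk⟩

variable [DecidableEq V] {𝓐 : Finset (Finset V)}

theorem graphMinor_top_of_shatters {s : Finset V} (hs : 𝓐.Shatters s)
    (hball : ∀ A ∈ 𝓐, ∃ v r, (A : Set V) = G.gBall v r) :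
    GraphMinor (⊤ : SimpleGraph s) G := by
  refine graphMinor_of_voronoi (a := 0) (p := (↑)) (fun i j hji => ?_) fun i j _ => ?_
  · simpa using SimpleGraph.edist_pos_of_ne (G := G) (Subtype.coe_ne_coe.2 hji)
  · obtain ⟨A, hA, hsA⟩ := hs (t := {(i : V), (j : V)}) (by simp [Finset.insert_subset_iff])
    obtain ⟨v, r, hvr⟩ := hball A hA
    have mem_iff (k : s) : k = i ∨ k = j ↔ siteDist G 0 (fun i : s => (i : V)) k v ≤ r := by
      have hk : (k : V) ∈ s ∩ A ↔ (k : V) ∈ (A : Set V) := by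
        simp only [Finset.mem_inter, k.2, true_and, Finset.mem_coe]
      rw [hsA, hvr, mem_gBall_iff_edist_le, SimpleGraph.edist_comm, Finset.mem_insert,
        Finset.mem_singleton, Subtype.coe_inj, Subtype.coe_inj] at hk
      simpa only [siteDist, Pi.zero_apply, Nat.cast_zero, zero_add] using hk
    have hi := (mem_iff i).1 (.inl rfl)
    have hj := (mem_iff j).1 (.inr rfl)
    refine ⟨v, ne_top_of_le_ne_top (ENat.natCast_ne_top r) hi,
      ne_top_of_le_ne_top (ENat.natCast_ne_top r) hj, fun k hki hkj => ?_⟩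
    have hk := not_le.1 (mt (mem_iff k).2 (not_or.2 ⟨hki, hkj⟩))
    exact ⟨hi.trans_lt hk, hj.trans_lt hk⟩

theorem vcDim_le_of_not_graphMinor_top {t : ℕ} (hG : ¬GraphMinor (⊤ : SimpleGraph (Fin t)) G)
    (hball : ∀ A ∈ 𝓐, ∃ v r, (A : Set V) = G.gBall v r) : 𝓐.vcDim ≤ t := by
  refine Finset.sup_le fun s hs => ?_
  by_contra! hlt
  have hcontained : (⊤ : SimpleGraph (Fin t)).IsContained (⊤ : SimpleGraph s) :=
    (SimpleGraph.Embedding.completeGraph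
      ((Fin.castLEEmb hlt.le).trans s.equivFin.symm.toEmbedding)).isContained
  exact hG ((GraphMinor.of_isContained hcontained).trans
    (graphMinor_top_of_shatters (Finset.mem_shatterer.1 hs) hball))

end Balls

section Contraction

open scoped Classical Finset

variable {V W : Type*} {G : SimpleGraph V}

theorem GraphMinor.of_fibers {H : SimpleGraph W} (φ : V → W)
    (conn : ∀ w, (G.induce (φ ⁻¹' {w})).Connected)
    (adj : ∀ a b, H.Adj a b → ∃ u v, φ u = a ∧ φ v = b ∧ G.Adj u v) : GraphMinor H G := by
  refine ⟨fun w => φ ⁻¹' {w}, conn, fun a b hab => ?_, fun a b hab => ?_⟩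
  · exact Disjoint.preimage φ (Set.disjoint_singleton.2 hab)
  · obtain ⟨u, v, rfl, rfl, huv⟩ := adj a b hab
    exact ⟨u, rfl, v, rfl, huv⟩

/-- `G` with every neighbour of `v` joined to `u`; deleting `v` from it contracts `v` onto `u`. -/
def joinNeighbors (G : SimpleGraph V) (u v : V) : SimpleGraph V :=
  G ⊔ SimpleGraph.fromRel fun a b => a = u ∧ G.Adj v b

theorem graphMinor_induce_joinNeighbors {u v : V} (huv : G.Adj u v) :
    GraphMinor ((joinNeighbors G u v).induce {v}ᶜ) G := by
  let φ : V → ({v}ᶜ : Set V) := fun x => if hx : x = v then ⟨u, huv.ne⟩ else ⟨x, hx⟩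
  have φ_v : φ v = ⟨u, huv.ne⟩ := dif_pos rfl
  have φ_coe (x : ({v}ᶜ : Set V)) : φ x = x := dif_neg x.2
  refine .of_fibers φ (fun x => ?_) ?_
  · obtain rfl | hxu := eq_or_ne x ⟨u, huv.ne⟩
    · have hfiber : φ ⁻¹' {⟨u, huv.ne⟩} = {u, v} := by
        ext y
        obtain rfl | hy := eq_or_ne y v
        · simp [φ_v]
        · simp [φ, hy, Subtype.ext_iff]
      rw [hfiber]
      exact G.induce_pair_connected_of_adj huv
    · have hfiber : φ ⁻¹' {x} = {x.1} := by
        ext y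
        obtain rfl | hy := eq_or_ne y v
        · simp [φ_v, hxu.symm, Ne.symm x.2]
        · simp [φ, hy, Subtype.ext_iff]
      rw [hfiber]
      exact .of_subsingleton
  · rintro a b (hab | ⟨-, ⟨ha, hvb⟩ | ⟨hb, hva⟩⟩)
    · exact ⟨a, b, φ_coe a, φ_coe b, hab⟩
    · exact ⟨v, b, φ_v.trans (Subtype.ext ha.symm), φ_coe b, hvb⟩
    · exact ⟨a, v, φ_coe a, φ_v.trans (Subtype.ext hb.symm), hva.symm⟩

variable [Fintype V]

theorem card_edgeFinset_induce_compl_singleton_add_degree (G : SimpleGraph V) (v : V) :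
    #(G.induce {v}ᶜ).edgeFinset + G.degree v = #G.edgeFinset := by
  rw [G.card_edgeFinset_induce_compl_singleton, G.card_edgeFinset_deleteIncidenceSet]
  exact Nat.sub_add_cancel (G.degree_le_card_edgeFinset v)

theorem neighborFinset_joinNeighbors {u v : V} (huv : G.Adj u v) :
    (joinNeighbors G u v).neighborFinset v = G.neighborFinset v := by
  ext w
  have hadj : (joinNeighbors G u v).Adj v w ↔ G.Adj v w := by simp [joinNeighbors, huv.ne']
  rw [SimpleGraph.mem_neighborFinset, SimpleGraph.mem_neighborFinset, hadj]

theorem card_edgeFinset_add_card_le_joinNeighbors (u v : V) :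
    #G.edgeFinset + #((G.neighborFinset v \ G.neighborFinset u).erase u) ≤
      #(joinNeighbors G u v).edgeFinset := by
  set N := (G.neighborFinset v \ G.neighborFinset u).erase u
  have mem_N {w : V} : w ∈ N ↔ w ≠ u ∧ G.Adj v w ∧ ¬G.Adj u w := by simp [N]
  have hdisj : Disjoint G.edgeFinset (N.image fun w => s(u, w)) := by
    refine Finset.disjoint_right.2 fun e he => ?_
    obtain ⟨w, hw, rfl⟩ := Finset.mem_image.1 he
    simpa using (mem_N.1 hw).2.2
  have hinj : Function.Injective fun w => s(u, w) := fun _ _ => Sym2.congr_right.1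
  rw [← Finset.card_image_of_injective N hinj, ← Finset.card_union_of_disjoint hdisj]
  refine Finset.card_le_card (Finset.union_subset ?_ fun e he => ?_)
  · exact SimpleGraph.edgeFinset_mono le_sup_left
  · obtain ⟨w, hw, rfl⟩ := Finset.mem_image.1 he
    obtain ⟨hwu, hvw, -⟩ := mem_N.1 hw
    rw [SimpleGraph.mem_edgeFinset, SimpleGraph.mem_edgeSet]
    exact .inr ⟨hwu.symm, .inl ⟨rfl, hvw⟩⟩

theorem card_edgeFinset_le_contraction {u v : V} (huv : G.Adj u v) :
    #G.edgeFinset ≤ #((joinNeighbors G u v).induce {v}ᶜ).edgeFinset +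
      #(G.neighborFinset u ∩ G.neighborFinset v) + 1 := by
  have hdelete := card_edgeFinset_induce_compl_singleton_add_degree (joinNeighbors G u v) v
  rw [← SimpleGraph.card_neighborFinset_eq_degree, neighborFinset_joinNeighbors huv] at hdelete
  have hjoin := card_edgeFinset_add_card_le_joinNeighbors (G := G) u v
  have hsplit := Finset.card_sdiff_add_card_inter (G.neighborFinset v) (G.neighborFinset u)
  rw [Finset.inter_comm] at hsplit
  have herase := Finset.pred_card_le_card_erase (s := G.neighborFinset v \ G.neighborFinset u)
    (a := u)
  omega

/-- The neighbourhood of `v` is nonempty, has at most `2 * k` vertices, and induces a graph of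
minimum degree at least `k`. -/
structure IsLocallyDenseAt (G : SimpleGraph V) (k : ℕ) (v : V) : Prop where
  degree_pos : 0 < G.degree v
  degree_le : G.degree v ≤ 2 * k
  le_card_inter : ∀ u, G.Adj v u → k ≤ #(G.neighborFinset v ∩ G.neighborFinset u)

theorem card_compl_singleton_add_one (v : V) :
    Fintype.card ({v}ᶜ : Set V) + 1 = Fintype.card V := by
  have := Fintype.card_pos_iff.2 ⟨v⟩
  rw [Fintype.card_compl_set, Set.card_singleton]
  omega

theorem exists_isLocallyDenseAt_of_card_edgeFinset_le {k : ℕ} [Nonempty V]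
    (hmin : ∀ v, 0 < G.degree v)
    (hcommon : ∀ u v, G.Adj v u → k ≤ #(G.neighborFinset v ∩ G.neighborFinset u))
    (hcard : #G.edgeFinset ≤ k * Fintype.card V) : ∃ v, IsLocallyDenseAt G k v := by
  have hsum : ∑ v, G.degree v ≤ ∑ _v : V, 2 * k := by
    rw [G.sum_degrees_eq_twice_card_edges, Finset.sum_const, Finset.card_univ, smul_eq_mul]
    linarith
  obtain ⟨v, -, hv⟩ := Finset.exists_le_of_sum_le Finset.univ_nonempty hsum
  exact ⟨v, hmin v, hv, fun u => hcommon u v⟩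

theorem exists_le_card_edgeFinset_eq {m : ℕ} (hm : m ≤ #G.edgeFinset) :
    ∃ H ≤ G, #H.edgeFinset = m := by
  obtain ⟨F, hFG, hF⟩ := Finset.exists_subset_card_eq hm
  have hle : (F : Set (Sym2 V)) ⊆ G.edgeSet := by simpa using Finset.coe_subset.2 hFG
  have hset : (SimpleGraph.fromEdgeSet (F : Set (Sym2 V))).edgeSet = F := by
    rw [SimpleGraph.edgeSet_fromEdgeSet, sdiff_eq_left]
    exact Set.disjoint_left.2 fun e he => G.not_isDiag_of_mem_edgeSet (hle he)
  refine ⟨SimpleGraph.fromEdgeSet F,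
    SimpleGraph.edgeSet_subset_edgeSet.1 (hset.trans_subset hle), ?_⟩
  rw [← hF]
  congr
  exact Finset.coe_injective (by rw [SimpleGraph.coe_edgeFinset, hset])

theorem exists_minor_compl_singleton [Nonempty V] {k : ℕ} (hk : 0 < k)
    (hcard : #G.edgeFinset = k * Fintype.card V) (hlocal : ¬∃ v, IsLocallyDenseAt G k v) :
    ∃ v, Nonempty ({v}ᶜ : Set V) ∧ ∃ H : SimpleGraph ({v}ᶜ : Set V),
      GraphMinor H G ∧ k * Fintype.card ({v}ᶜ : Set V) ≤ #H.edgeFinset := by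
  have card_succ (v : V) : k * Fintype.card ({v}ᶜ : Set V) + k = #G.edgeFinset := by
    rw [hcard, ← card_compl_singleton_add_one v, mul_add_one]
  contrapose! hlocal with hmin
  refine exists_isLocallyDenseAt_of_card_edgeFinset_le (fun v => ?_) (fun u v huv => ?_) hcard.le
  · by_contra! hv
    have hinduce := card_edgeFinset_induce_compl_singleton_add_degree G v
    have hv_card := card_succ v
    obtain ⟨e, -⟩ := Finset.card_pos.1 (show 0 < #(G.induce {v}ᶜ).edgeFinset by omega)
    have hlt : #(G.induce {v}ᶜ).edgeFinset < k * Fintype.card ({v}ᶜ : Set V) := by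
      convert! hmin v ⟨(Quot.out e).1⟩ (G.induce {v}ᶜ)
        (.of_isContained (SimpleGraph.Embedding.induce _).isContained)
    omega
  · by_contra! hfew
    have hcontract := card_edgeFinset_le_contraction huv.symm
    have hlt' : #((joinNeighbors G u v).induce {v}ᶜ).edgeFinset <
        k * Fintype.card ({v}ᶜ : Set V) := by
      convert! hmin v ⟨u, huv.ne'⟩ _ (graphMinor_induce_joinNeighbors huv.symm)
    have hv_card := card_succ v
    rw [Finset.inter_comm] at hfew
    omega

-- Mader: among the minors with at least `k` edges per vertex take one with fewest vertices, and
-- in it a spanning subgraph with exactly `k` edges per vertex. It has no isolated vertex, and each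
-- of its edges lies in at least `k` triangles.
theorem exists_minor_isLocallyDenseAt.{u} {V : Type u} [Fintype V] [Nonempty V] {k : ℕ}
    (hk : 0 < k) (G : SimpleGraph V) (hcard : k * Fintype.card V ≤ #G.edgeFinset) :
    ∃ (W : Type u) (_ : Fintype W) (H : SimpleGraph W) (v : W),
      GraphMinor H G ∧ IsLocallyDenseAt H k v := by
  induction hn : Fintype.card V using Nat.strong_induction_on generalizing V with
  | _ n ih =>
    subst hn
    obtain ⟨G', hG', hcard'⟩ := exists_le_card_edgeFinset_eq hcard
    have hminor : GraphMinor G' G := .of_isContained (.of_le hG')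
    by_cases hlocal : ∃ v, IsLocallyDenseAt G' k v
    · obtain ⟨v, hv⟩ := hlocal
      exact ⟨V, _, G', v, hminor, hv⟩
    obtain ⟨v, _, H, hH, hH_card⟩ := exists_minor_compl_singleton hk hcard' hlocal
    have hlt : Fintype.card ({v}ᶜ : Set V) < Fintype.card V := by
      rw [← card_compl_singleton_add_one v]
      exact Nat.lt_succ_self _
    obtain ⟨W, _, K, w, hK, hw⟩ := ih _ hlt H hH_card rfl
    exact ⟨W, _, K, w, hK.trans (hH.trans hminor), hw⟩

end Contraction

section DenseGraphs

open scoped Classical Finset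

theorem exists_greedy_cover {α β : Type*} (rel : α → β → Prop) [∀ x y, Decidable (rel x y)]
    {X : Finset α} {R : Finset β} {a b : ℕ} (hR : R.Nonempty)
    (hrel : ∀ x ∈ X, b * #{y ∈ R | ¬rel x y} ≤ a * #R) (s : ℕ) :
    ∃ Y ⊆ R, #Y ≤ s ∧ b ^ s * #{x ∈ X | ∀ y ∈ Y, ¬rel x y} ≤ a ^ s * #X := by
  induction s with
  | zero => exact ⟨∅, R.empty_subset, le_rfl, by simp⟩
  | succ s ih =>
    obtain ⟨Y, hYR, hY, hcover⟩ := ih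
    set U := {x ∈ X | ∀ y ∈ Y, ¬rel x y}
    obtain ⟨y, hyR, hy⟩ : ∃ y ∈ R, b * #{x ∈ U | ¬rel x y} ≤ a * #U := by
      refine Finset.exists_le_of_sum_le hR ?_
      calc ∑ y ∈ R, b * #{x ∈ U | ¬rel x y}
          = ∑ x ∈ U, b * #{y ∈ R | ¬rel x y} := by
            rw [← Finset.mul_sum, ← Finset.mul_sum]
            exact congrArg _ (Finset.sum_card_bipartiteAbove_eq_sum_card_bipartiteBelow _).symm
        _ ≤ ∑ _x ∈ U, a * #R := Finset.sum_le_sum fun x hx => hrel x (Finset.mem_filter.1 hx).1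
        _ = ∑ _y ∈ R, a * #U := by simp only [Finset.sum_const, smul_eq_mul]; ring
    refine ⟨insert y Y, Finset.insert_subset hyR hYR,
      (Finset.card_insert_le y Y).trans (Nat.succ_le_succ hY), ?_⟩
    have huncovered : {x ∈ X | ∀ z ∈ insert y Y, ¬rel x z} = {x ∈ U | ¬rel x y} := by
      ext x
      simp only [U, Finset.mem_filter, Finset.forall_mem_insert]
      tauto
    calc b ^ (s + 1) * #{x ∈ X | ∀ z ∈ insert y Y, ¬rel x z}
        = b ^ s * (b * #{x ∈ U | ¬rel x y}) := by rw [huncovered, pow_succ, mul_assoc]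
      _ ≤ b ^ s * (a * #U) := Nat.mul_le_mul_left _ hy
      _ = a * (b ^ s * #U) := by ring
      _ ≤ a * (a ^ s * #X) := Nat.mul_le_mul_left _ hcover
      _ = a ^ (s + 1) * #X := by ring

variable {V : Type*} {G : SimpleGraph V} {W X : Finset V} {r t : ℕ}

theorem graphMinor_top_of_extension {P : Finset V → Prop}
    (hconn : ∀ C, P C → (G.induce (C : Set V)).Connected)
    (hext : ∀ 𝓑 : Finset (Finset V), #𝓑 < t → (∀ B ∈ 𝓑, P B) →
      ∃ C, P C ∧ ∀ B ∈ 𝓑, Disjoint B C ∧ ∃ b ∈ B, ∃ c ∈ C, G.Adj b c) :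
    GraphMinor (⊤ : SimpleGraph (Fin t)) G := by
  let Linked (B C : Finset V) : Prop := Disjoint B C ∧ ∃ b ∈ B, ∃ c ∈ C, G.Adj b c
  have linked_symm : Std.Symm Linked := ⟨fun B C ⟨hBC, b, hb, c, hc, hbc⟩ =>
    ⟨hBC.symm, c, hc, b, hb, hbc.symm⟩⟩
  obtain ⟨𝓑, h𝓑, hP, hlinked⟩ : ∃ 𝓑 : Finset (Finset V), #𝓑 = t ∧ (∀ B ∈ 𝓑, P B) ∧
      (𝓑 : Set (Finset V)).Pairwise Linked := by
    suffices h : ∀ j ≤ t, ∃ 𝓑 : Finset (Finset V), #𝓑 = j ∧ (∀ B ∈ 𝓑, P B) ∧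
        (𝓑 : Set (Finset V)).Pairwise Linked from h t le_rfl
    intro j hj
    induction j with
    | zero => exact ⟨∅, rfl, by simp, by simp⟩
    | succ j ih =>
      obtain ⟨𝓑, rfl, hP, hlinked⟩ := ih (Nat.le_of_succ_le hj)
      obtain ⟨C, hC, hC𝓑⟩ := hext 𝓑 hj hP
      have hnotMem : C ∉ 𝓑 := fun hmem => by
        obtain ⟨-, b, hb, -⟩ := hC𝓑 C hmem
        exact Finset.disjoint_left.1 (hC𝓑 C hmem).1 hb hb
      refine ⟨insert C 𝓑, Finset.card_insert_of_notMem hnotMem,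
        (Finset.forall_mem_insert _ _ _).2 ⟨hC, hP⟩, ?_⟩
      rw [Finset.coe_insert, Set.pairwise_insert_of_symm]
      exact ⟨hlinked, fun B hB _ => linked_symm.symm _ _ (hC𝓑 B hB)⟩
  let e : Fin t ≃ 𝓑 := (𝓑.equivFinOfCardEq h𝓑).symm
  have hpair (i j : Fin t) (hij : i ≠ j) : Linked (e i) (e j) :=
    hlinked (e i).2 (e j).2 (Subtype.coe_injective.ne (e.injective.ne hij))
  exact ⟨fun i => (e i : Finset V), fun i => hconn _ (hP _ (e i).2),
    fun i j hij => Finset.disjoint_coe.2 (hpair i j hij).1, fun i j hij => (hpair i j hij.ne).2⟩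

/-- The vertices of `W` without a neighbour in `B`. -/
noncomputable def undominated (G : SimpleGraph V) (W B : Finset V) : Finset V :=
  {u ∈ W | ∀ b ∈ B, ¬G.Adj u b}

/-- A vertex `z₁ = z₂` or an edge `z₁z₂` of `W` outside `X` whose neighbourhood in `W \ X` meets
the neighbourhood of each vertex of `W` in at least a hundredth of `W`. -/
structure IsHub (G : SimpleGraph V) (W X : Finset V) (z₁ z₂ : V) : Prop where
  mem_left : z₁ ∈ W \ X
  mem_right : z₂ ∈ W \ X
  eq_or_adj : z₁ = z₂ ∨ G.Adj z₁ z₂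
  card_le : ∀ u ∈ W, #W ≤ 100 * #{y ∈ W \ X | (G.Adj z₁ y ∨ G.Adj z₂ y) ∧ G.Adj u y}

/-- A connected set of `O(r)` vertices of `W` that dominates all but a `2 ^ (-(r + 7))` fraction of
`W`. These are the branch sets of the clique minors found below. -/
structure IsDominatingBranch (G : SimpleGraph V) (W : Finset V) (r : ℕ) (C : Finset V) : Prop where
  subset : C ⊆ W
  card_le : #C ≤ 70 * r + 485
  connected : (G.induce (C : Set V)).Connected
  card_undominated_le : #(undominated G W C) * 2 ^ (r + 7) ≤ #W

namespace IsHub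

variable {z₁ z₂ : V}

theorem connected_induce_union (hub : IsHub G W X z₁ z₂) {Y : Finset V}
    (hY : ∀ y ∈ Y, G.Adj z₁ y ∨ G.Adj z₂ y) :
    (G.induce (({z₁, z₂} ∪ Y : Finset V) : Set V)).Connected := by
  refine connected_induce_of_descent (p := z₁)
    (fun y => if y = z₁ then 0 else if y = z₂ then 1 else 2) (by simp) fun y hy hy₁ => ?_
  obtain rfl | hy₂ := eq_or_ne y z₂
  · exact ⟨z₁, by simp, (hub.eq_or_adj.resolve_left hy₁.symm).symm, by simp [hy₁]⟩
  · have hyY : y ∈ Y := by simpa [hy₁, hy₂] using hy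
    obtain h | h := hY y hyY
    · exact ⟨z₁, by simp, h.symm, by simp [hy₁, hy₂]⟩
    · refine ⟨z₂, by simp, h.symm, ?_⟩
      simp only [hy₁, hy₂, if_false, if_true]
      split_ifs <;> norm_num

theorem exists_dominating (hub : IsHub G W X z₁ z₂) (hW : W.Nonempty) (m : ℕ) :
    ∃ Y ⊆ {y ∈ W \ X | G.Adj z₁ y ∨ G.Adj z₂ y}, #Y ≤ 69 * m ∧
      #(undominated G W Y) * 2 ^ m ≤ #W := by
  set R := {y ∈ W \ X | G.Adj z₁ y ∨ G.Adj z₂ y} with hR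
  have hRW : #R ≤ #W := Finset.card_le_card ((Finset.filter_subset _ _).trans Finset.sdiff_subset)
  have hit (u) (hu : u ∈ W) : #W ≤ 100 * #{y ∈ R | G.Adj u y} := by
    rw [hR, Finset.filter_filter]
    exact hub.card_le u hu
  have hRne : R.Nonempty := by
    obtain ⟨u, hu⟩ := hW
    have := hit u hu
    have := Finset.card_pos.2 ⟨u, hu⟩
    have := Finset.card_filter_le R (fun y => G.Adj u y)
    exact Finset.card_pos.1 (by omega)
  obtain ⟨Y, hYR, hYcard, hY⟩ := exists_greedy_cover G.Adj (X := W) (a := 99) (b := 100) hRne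
    (fun u hu => by
      have := hit u hu
      have := Finset.card_filter_add_card_filter_not (s := R) (fun y => G.Adj u y)
      omega) (69 * m)
  refine ⟨Y, hYR, hYcard, ?_⟩
  have hhalf : 99 ^ (69 * m) * 2 ^ m ≤ 100 ^ (69 * m) := by
    rw [pow_mul, pow_mul, ← mul_pow]
    exact Nat.pow_le_pow_left (by norm_num) m
  refine Nat.le_of_mul_le_mul_left ?_ (show 0 < 100 ^ (69 * m) by positivity)
  calc 100 ^ (69 * m) * (#(undominated G W Y) * 2 ^ m)
      = 100 ^ (69 * m) * #(undominated G W Y) * 2 ^ m := by ring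
    _ ≤ 99 ^ (69 * m) * #W * 2 ^ m := Nat.mul_le_mul_right _ hY
    _ = 99 ^ (69 * m) * 2 ^ m * #W := by ring
    _ ≤ 100 ^ (69 * m) * #W := Nat.mul_le_mul_right _ hhalf

theorem exists_touching (hub : IsHub G W X z₁ z₂) (hW : W.Nonempty) {𝓑 : Finset (Finset V)}
    (h𝓑 : #𝓑 < 2 ^ r ^ 2) (hdom : ∀ B ∈ 𝓑, #(undominated G W B) * 2 ^ (r + 7) ≤ #W) :
    ∃ Y ⊆ {y ∈ W \ X | G.Adj z₁ y ∨ G.Adj z₂ y}, #Y ≤ r ∧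
      ∀ B ∈ 𝓑, ∃ b ∈ B, ∃ y ∈ Y, G.Adj b y := by
  set R := {y ∈ W \ X | G.Adj z₁ y ∨ G.Adj z₂ y}
  have hRcard : #W ≤ 100 * #R := by
    obtain ⟨u, hu⟩ := hW
    refine (hub.card_le u hu).trans (Nat.mul_le_mul_left _ (Finset.card_le_card ?_))
    exact Finset.monotone_filter_right _ fun y _ hy => hy.1
  obtain ⟨Y, hYR, hYcard, hY⟩ := exists_greedy_cover (fun B y => y ∉ undominated G W B)
    (X := 𝓑) (R := R) (a := 1) (b := 2 ^ r)
    (Finset.card_pos.1 (by have := hW.card_pos; omega))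
    (fun B hB => by
      have hsub : #{y ∈ R | ¬y ∉ undominated G W B} ≤ #(undominated G W B) :=
        Finset.card_le_card fun y hy => not_not.1 (Finset.mem_filter.1 hy).2
      have hB := hdom B hB
      have hmul := Nat.mul_le_mul_left (2 ^ r) hsub
      rw [pow_add, mul_left_comm, ← mul_assoc] at hB
      omega) r
  refine ⟨Y, hYR, hYcard, ?_⟩
  rw [← pow_mul, ← sq, one_pow, one_mul] at hY
  intro B hB
  obtain ⟨y, hy, hyB⟩ : ∃ y ∈ Y, y ∉ undominated G W B := by
    by_contra! hall
    have hpos : 0 < #{B ∈ 𝓑 | ∀ y ∈ Y, ¬y ∉ undominated G W B} :=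
      Finset.card_pos.2 ⟨B, Finset.mem_filter.2 ⟨hB, fun y hy => not_not.2 (hall y hy)⟩⟩
    exact absurd ((Nat.le_mul_of_pos_right (2 ^ r ^ 2) hpos).trans hY) (by omega)
  have hyW : y ∈ W := (Finset.mem_sdiff.1 (Finset.mem_filter.1 (hYR hy)).1).1
  simp only [undominated, Finset.mem_filter, hyW, true_and, not_forall, not_not] at hyB
  obtain ⟨b, hb, hyb⟩ := hyB
  exact ⟨b, hb, y, hy, hyb.symm⟩

theorem exists_isDominatingBranch (hub : IsHub G W X z₁ z₂) {𝓑 : Finset (Finset V)}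
    (h𝓑 : #𝓑 < 2 ^ r ^ 2) (hdom : ∀ B ∈ 𝓑, #(undominated G W B) * 2 ^ (r + 7) ≤ #W) :
    ∃ C ⊆ W \ X, IsDominatingBranch G W r C ∧ ∀ B ∈ 𝓑, ∃ b ∈ B, ∃ c ∈ C, G.Adj b c := by
  have hW : W.Nonempty := ⟨z₁, (Finset.mem_sdiff.1 hub.mem_left).1⟩
  obtain ⟨Y₁, hY₁R, hY₁card, hY₁⟩ := hub.exists_dominating hW (r + 7)
  obtain ⟨Y₂, hY₂R, hY₂card, hY₂⟩ := hub.exists_touching hW h𝓑 hdom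
  have hYR := Finset.union_subset hY₁R hY₂R
  have hCWX : {z₁, z₂} ∪ (Y₁ ∪ Y₂) ⊆ W \ X := Finset.union_subset
    (Finset.insert_subset hub.mem_left (Finset.singleton_subset_iff.2 hub.mem_right))
    (hYR.trans (Finset.filter_subset _ _))
  refine ⟨{z₁, z₂} ∪ (Y₁ ∪ Y₂), hCWX, ⟨hCWX.trans Finset.sdiff_subset, ?_, ?_, ?_⟩,
    fun B hB => ?_⟩
  · have := Finset.card_union_le {z₁, z₂} (Y₁ ∪ Y₂)
    have := Finset.card_union_le Y₁ Y₂
    have := Finset.card_le_two (a := z₁) (b := z₂)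
    omega
  · exact hub.connected_induce_union fun y hy => (Finset.mem_filter.1 (hYR hy)).2
  · refine (Nat.mul_le_mul_right _ (Finset.card_le_card ?_)).trans hY₁
    refine Finset.monotone_filter_right _ fun u _ hu y hy => hu y ?_
    exact Finset.mem_union_right _ (Finset.mem_union_left _ hy)
  · obtain ⟨b, hb, y, hy, hby⟩ := hY₂ B hB
    exact ⟨b, hb, y, Finset.mem_union_right _ (Finset.mem_union_right _ hy), hby⟩

end IsHub

theorem graphMinor_top_of_hubs (ht : t ≤ 2 ^ r ^ 2) (hW : 100 * (t * (70 * r + 485)) ≤ #W)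
    (hub : ∀ X ⊆ W, 100 * #X ≤ #W → ∃ z₁ z₂, IsHub G W X z₁ z₂) :
    GraphMinor (⊤ : SimpleGraph (Fin t)) G := by
  refine graphMinor_top_of_extension (P := IsDominatingBranch G W r) (fun C hC => hC.connected)
    fun 𝓑 h𝓑 hP => ?_
  have hXW : 𝓑.biUnion id ⊆ W := Finset.biUnion_subset.2 fun B hB => (hP B hB).subset
  have hXcard : #(𝓑.biUnion id) ≤ t * (70 * r + 485) :=
    (Finset.card_biUnion_le_card_mul _ _ _ fun B hB => (hP B hB).card_le).trans
      (Nat.mul_le_mul_right _ h𝓑.le)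
  obtain ⟨z₁, z₂, hz⟩ := hub _ hXW (by omega)
  obtain ⟨C, hCX, hC, hadj⟩ := hz.exists_isDominatingBranch (h𝓑.trans_le ht)
    fun B hB => (hP B hB).card_undominated_le
  refine ⟨C, hC, fun B hB => ⟨?_, hadj B hB⟩⟩
  exact (Finset.disjoint_sdiff.mono_right hCX).mono_left (Finset.subset_biUnion_of_mem id hB)

theorem exists_isHub_of_nearly_complete (hW : W.Nonempty)
    (hnon : ∀ u ∈ W, 20 * #{x ∈ W | ¬G.Adj u x} ≤ #W) (hX : 100 * #X ≤ #W) :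
    ∃ z, IsHub G W X z z := by
  obtain ⟨z, hzW, hzX⟩ : ∃ z ∈ W, z ∉ X :=
    Finset.exists_mem_notMem_of_card_lt_card (by have := hW.card_pos; omega)
  have hz := Finset.mem_sdiff.2 ⟨hzW, hzX⟩
  refine ⟨z, hz, hz, .inl rfl, fun u hu => ?_⟩
  have hcover : W ⊆ {y ∈ W \ X | (G.Adj z y ∨ G.Adj z y) ∧ G.Adj u y} ∪
      (X ∪ ({x ∈ W | ¬G.Adj z x} ∪ {x ∈ W | ¬G.Adj u x})) := fun y hy => by
    simp only [Finset.mem_union, Finset.mem_filter, Finset.mem_sdiff]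
    tauto
  have hcard := (Finset.card_le_card hcover).trans <| (Finset.card_union_le _ _).trans <|
    Nat.add_le_add_left ((Finset.card_union_le _ _).trans <|
      Nat.add_le_add_left (Finset.card_union_le _ _) _) _
  have := hnon z hzW
  have := hnon u hu
  omega

theorem le_card_neighbors_sdiff (hdeg : ∀ u ∈ W, #W ≤ 2 * #{y ∈ W | G.Adj u y})
    (hX : 100 * #X ≤ #W) {u : V} (hu : u ∈ W) : 49 * #W ≤ 100 * #{y ∈ W \ X | G.Adj u y} := by
  have hsplit : {y ∈ W | G.Adj u y} ⊆ {y ∈ W \ X | G.Adj u y} ∪ X := fun y hy => by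
    simp only [Finset.mem_union, Finset.mem_filter, Finset.mem_sdiff] at hy ⊢
    tauto
  have := (Finset.card_le_card hsplit).trans (Finset.card_union_le _ _)
  have := hdeg u hu
  omega

-- If the edge `zy` is not a hub, then some `u` has its at least `#W / 2` neighbours almost
-- disjoint from those of `z` and `y`, so these two neighbourhoods nearly coincide.
theorem card_nonneighbors_le_of_not_isHub (hdeg : ∀ u ∈ W, #W ≤ 2 * #{y ∈ W | G.Adj u y})
    (hX : 100 * #X ≤ #W) {z y : V} (hz : z ∈ W \ X) (hy : y ∈ W \ X) (hzy : G.Adj z y)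
    (hub : ¬IsHub G W X z y) :
    100 * #{x ∈ {x ∈ W \ X | G.Adj z x} | ¬G.Adj y x} ≤ 2 * #W := by
  obtain ⟨u, hu, hlt⟩ : ∃ u ∈ W,
      100 * #{x ∈ W \ X | (G.Adj z x ∨ G.Adj y x) ∧ G.Adj u x} < #W := by
    by_contra! h
    exact hub ⟨hz, hy, .inr hzy, h⟩
  have hsum := Finset.card_union_add_card_inter {x ∈ W | G.Adj u x}
    {x ∈ W \ X | G.Adj z x ∨ G.Adj y x}
  have hunion : #({x ∈ W | G.Adj u x} ∪ {x ∈ W \ X | G.Adj z x ∨ G.Adj y x}) ≤ #W :=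
    Finset.card_le_card (Finset.union_subset (Finset.filter_subset _ _)
      ((Finset.filter_subset _ _).trans Finset.sdiff_subset))
  have hinter : #({x ∈ W | G.Adj u x} ∩ {x ∈ W \ X | G.Adj z x ∨ G.Adj y x}) ≤
      #{x ∈ W \ X | (G.Adj z x ∨ G.Adj y x) ∧ G.Adj u x} := by
    refine Finset.card_le_card fun x hx => ?_
    simp only [Finset.mem_inter, Finset.mem_filter] at hx ⊢
    exact ⟨hx.2.1, hx.2.2, hx.1.2⟩
  have hsplit : #{x ∈ {x ∈ W \ X | G.Adj z x} | ¬G.Adj y x} + #{x ∈ W \ X | G.Adj y x} ≤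
      #{x ∈ W \ X | G.Adj z x ∨ G.Adj y x} := by
    rw [← Finset.card_union_of_disjoint]
    · refine Finset.card_le_card fun x hx => ?_
      simp only [Finset.mem_union, Finset.mem_filter] at hx ⊢
      tauto
    · exact Finset.disjoint_left.2 fun x hx hx' =>
        (Finset.mem_filter.1 hx).2 (Finset.mem_filter.1 hx').2
  have := hdeg u hu
  have := le_card_neighbors_sdiff hdeg hX (Finset.mem_sdiff.1 hy).1
  omega

-- Either there are hubs to build a branch set around, at each step, or some neighbourhood is nearly
-- complete, in which case every vertex of it is a hub.
theorem graphMinor_top_of_dense (ht : t ≤ 2 ^ r ^ 2) (hW : 300 * (t * (70 * r + 485)) ≤ #W)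
    (hne : W.Nonempty) (hdeg : ∀ u ∈ W, #W ≤ 2 * #{y ∈ W | G.Adj u y}) :
    GraphMinor (⊤ : SimpleGraph (Fin t)) G := by
  by_cases hub : ∀ X ⊆ W, 100 * #X ≤ #W → ∃ z₁ z₂, IsHub G W X z₁ z₂
  · exact graphMinor_top_of_hubs ht (by omega) hub
  push Not at hub
  obtain ⟨X, -, hX, hub⟩ := hub
  have hpos := hne.card_pos
  obtain ⟨z, hzW, hzX⟩ : ∃ z ∈ W, z ∉ X := Finset.exists_mem_notMem_of_card_lt_card (by omega)
  have hW' := le_card_neighbors_sdiff hdeg hX hzW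
  have hnon (y) (hy : y ∈ {y ∈ W \ X | G.Adj z y}) :=
    card_nonneighbors_le_of_not_isHub hdeg hX (Finset.mem_sdiff.2 ⟨hzW, hzX⟩)
      (Finset.mem_filter.1 hy).1 (Finset.mem_filter.1 hy).2 (hub z y)
  refine graphMinor_top_of_hubs (W := {y ∈ W \ X | G.Adj z y}) ht (by omega) fun Y _ hY => ?_
  obtain ⟨z', hz'⟩ := exists_isHub_of_nearly_complete (G := G) (Finset.card_pos.1 (by omega))
    (fun y hy => by have := hnon y hy; omega) hY
  exact ⟨z', z', hz'⟩

/-- The number of edges per vertex that forces a `K_t` minor, of order `t √(log t)`. -/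
def ktDensity (t : ℕ) : ℕ := 2 ^ 18 * (t * (Nat.sqrt (Nat.log 2 t) + 1))

theorem card_edgeFinset_le_of_not_graphMinor_top [Fintype V]
    (hG : ¬GraphMinor (⊤ : SimpleGraph (Fin t)) G) :
    #G.edgeFinset ≤ ktDensity t * Fintype.card V := by
  contrapose! hG
  obtain ⟨e, -⟩ := Finset.card_pos.1 (Nat.zero_lt_of_lt hG)
  have : Nonempty V := ⟨(Quot.out e).1⟩
  obtain rfl | ht := t.eq_zero_or_pos
  · exact .of_subsingleton _ _
  set r := Nat.sqrt (Nat.log 2 t) + 1 with hr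
  have ht_le : t ≤ 2 ^ r ^ 2 := by
    refine (Nat.lt_pow_succ_log_self one_lt_two t).le.trans (Nat.pow_le_pow_right two_pos ?_)
    exact Nat.lt_succ_sqrt' _
  have hdensity : 300 * (t * (70 * r + 485)) ≤ ktDensity t := by
    rw [ktDensity]
    nlinarith [Nat.mul_le_mul_left t (show 1 ≤ r by omega)]
  have hpos : 0 < ktDensity t := Nat.mul_pos (by positivity) (Nat.mul_pos ht (Nat.succ_pos _))
  obtain ⟨W, _, H, v, hHG, hv⟩ := exists_minor_isLocallyDenseAt hpos G hG.le
  refine .trans (graphMinor_top_of_dense (W := H.neighborFinset v) ht_le ?_ ?_ fun u hu => ?_) hHG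
  · obtain ⟨u, hu⟩ := Finset.card_pos.1 hv.degree_pos
    rw [SimpleGraph.mem_neighborFinset] at hu
    exact hdensity.trans ((hv.le_card_inter u hu).trans
      (Finset.card_le_card Finset.inter_subset_left))
  · exact Finset.card_pos.1 hv.degree_pos
  · have hinter : H.neighborFinset v ∩ H.neighborFinset u =
        {y ∈ H.neighborFinset v | H.Adj u y} := by ext; simp
    have := hv.le_card_inter u (by simpa using hu)
    have := hv.degree_le
    rw [← hinter, SimpleGraph.card_neighborFinset_eq_degree]
    omega

end DenseGraphs

section RandomSubsets

open scoped Classical Finset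

theorem sum_mul_card_filter {α β : Type*} (s : Finset α) (t : Finset β) (f : α → ℝ)
    (rel : α → β → Prop) [∀ a b, Decidable (rel a b)] :
    ∑ a ∈ s, f a * (#{b ∈ t | rel a b} : ℝ) = ∑ b ∈ t, ∑ a ∈ s with rel a b, f a := by
  simp only [Finset.sum_filter, Finset.card_filter, Nat.cast_sum, Nat.cast_ite, Nat.cast_one,
    Nat.cast_zero, Finset.mul_sum, mul_ite, mul_one, mul_zero]
  exact Finset.sum_comm

theorem one_sub_sum_le_prod_one_sub {ι : Type*} (s : Finset ι) {q : ι → ℝ} (hq₀ : ∀ i, 0 ≤ q i)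
    (hq₁ : ∀ i, q i ≤ 1) : 1 - ∑ i ∈ s, q i ≤ ∏ i ∈ s, (1 - q i) := by
  induction s using Finset.induction_on with
  | empty => simp
  | insert a s ha ih =>
    rw [Finset.sum_insert ha, Finset.prod_insert ha]
    have hsum : 0 ≤ ∑ i ∈ s, q i := Finset.sum_nonneg fun i _ => hq₀ i
    linarith [mul_le_mul_of_nonneg_left ih (sub_nonneg.2 (hq₁ a)), mul_nonneg (hq₀ a) hsum]

variable {ι : Type*} [Fintype ι] {q : ι → ℝ}

/-- The probability that a random set containing each `i` independently with probability `q i`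
equals `S`. -/
noncomputable def subsetProb (q : ι → ℝ) (S : Finset ι) : ℝ :=
  (∏ i ∈ S, q i) * ∏ i ∈ Sᶜ, (1 - q i)

theorem subsetProb_nonneg (hq₀ : ∀ i, 0 ≤ q i) (hq₁ : ∀ i, q i ≤ 1) (S : Finset ι) :
    0 ≤ subsetProb q S :=
  mul_nonneg (Finset.prod_nonneg fun i _ => hq₀ i)
    (Finset.prod_nonneg fun i _ => sub_nonneg.2 (hq₁ i))

theorem sum_subsetProb_of_subset_of_disjoint (q : ι → ℝ) {A K : Finset ι} (hAK : Disjoint A K) :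
    ∑ S : Finset ι with A ⊆ S ∧ Disjoint K S, subsetProb q S =
      (∏ i ∈ A, q i) * ∏ i ∈ K, (1 - q i) := by
  have hvanish (S : Finset ι) : (∏ i ∈ S, if i ∈ K then 0 else q i) *
      (∏ i ∈ Sᶜ, if i ∈ A then 0 else 1 - q i) =
        if A ⊆ S ∧ Disjoint K S then subsetProb q S else 0 := by
    split_ifs with hS
    · refine congrArg₂ _ (Finset.prod_congr rfl fun i hi => ?_)
        (Finset.prod_congr rfl fun i hi => ?_)
      · rw [if_neg (Finset.disjoint_right.1 hS.2 hi)]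
      · rw [if_neg fun hA => Finset.mem_compl.1 hi (hS.1 hA)]
    · obtain hS | hS := not_and_or.1 hS
      · obtain ⟨a, haA, haS⟩ := Finset.not_subset.1 hS
        rw [Finset.prod_eq_zero (i := a) (s := Sᶜ) (by simpa using haS) (by simp [haA]), mul_zero]
      · obtain ⟨a, haK, haS⟩ := Finset.not_disjoint_iff.1 hS
        rw [Finset.prod_eq_zero (i := a) haS (by simp [haK]), zero_mul]
  rw [Finset.sum_filter, ← Finset.sum_congr rfl fun S _ => hvanish S, ← Fintype.prod_add,
    ← Fintype.prod_ite_mem A, ← Fintype.prod_ite_mem K, ← Finset.prod_mul_distrib]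
  refine Finset.prod_congr rfl fun i _ => ?_
  by_cases hA : i ∈ A
  · simp [hA, Finset.disjoint_left.1 hAK hA]
  · by_cases hK : i ∈ K <;> simp [hA, hK]

theorem sum_subsetProb_of_subset (q : ι → ℝ) (A : Finset ι) :
    ∑ S : Finset ι with A ⊆ S, subsetProb q S = ∏ i ∈ A, q i := by
  simpa using sum_subsetProb_of_subset_of_disjoint q (Finset.disjoint_empty_right A)

theorem sum_subsetProb (q : ι → ℝ) : ∑ S, subsetProb q S = 1 := by
  simpa using sum_subsetProb_of_subset q ∅

theorem sum_subsetProb_mul_card (q : ι → ℝ) : ∑ S, subsetProb q S * (#S : ℝ) = ∑ i, q i := by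
  calc ∑ S, subsetProb q S * (#S : ℝ) = ∑ S, subsetProb q S * (#{i | i ∈ S} : ℝ) := by simp
    _ = ∑ i, ∑ S : Finset ι with i ∈ S, subsetProb q S :=
        sum_mul_card_filter _ _ _ fun S i => i ∈ S
    _ = ∑ i, q i := Finset.sum_congr rfl fun i _ => by
        simpa using sum_subsetProb_of_subset q {i}

theorem card_filter_adj (H : SimpleGraph ι) :
    #{p : ι × ι | H.Adj p.1 p.2} = 2 * #H.edgeFinset := by
  rw [← H.sum_degrees_eq_twice_card_edges, Finset.card_filter, Fintype.sum_prod_type]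
  refine Finset.sum_congr rfl fun i _ => ?_
  rw [← Finset.card_filter, ← H.card_neighborFinset_eq_degree, H.neighborFinset_eq_filter]

theorem card_le_indepNum_add_card_adj (H : SimpleGraph ι) (S : Finset ι) :
    #S ≤ H.indepNum + #{p : ι × ι | H.Adj p.1 p.2 ∧ {p.1, p.2} ⊆ S} := by
  set P := ({p : ι × ι | H.Adj p.1 p.2 ∧ {p.1, p.2} ⊆ S} : Finset (ι × ι)) with hP
  have hindep : H.IsIndepSet (S \ P.image Prod.fst : Finset ι) := by
    intro i hi j hj _ hij
    rw [Finset.mem_coe, Finset.mem_sdiff] at hi hj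
    refine hi.2 (Finset.mem_image.2 ⟨(i, j), ?_, rfl⟩)
    simp [hP, hij, Finset.insert_subset_iff, hi.1, hj.1]
  calc #S ≤ #(S \ P.image Prod.fst) + #(P.image Prod.fst) := Finset.card_le_card_sdiff_add_card
    _ ≤ H.indepNum + #P := Nat.add_le_add hindep.card_le_indepNum Finset.card_image_le

-- Sample each vertex with probability `w / (2c)` and delete one end of each surviving edge.
theorem sum_le_mul_indepNum {H : SimpleGraph ι} {w : ι → ℝ} {c : ℝ} (hc : 1 / 2 ≤ c)
    (hw₀ : ∀ i, 0 ≤ w i) (hw₁ : ∀ i, w i ≤ 1)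
    (hsparse : ∑ p : ι × ι with H.Adj p.1 p.2, w p.1 * w p.2 ≤ c * ∑ i, w i) :
    ∑ i, w i ≤ 4 * c * H.indepNum := by
  have : 0 < c := by linarith
  let q : ι → ℝ := fun i => w i / (2 * c)
  have hprob (S : Finset ι) : 0 ≤ subsetProb q S :=
    subsetProb_nonneg (fun i => div_nonneg (hw₀ i) (by positivity))
      (fun i => (div_le_one (by positivity)).2 (by linarith [hw₁ i])) S
  have hpairs : ∑ S, subsetProb q S * (#{p : ι × ι | H.Adj p.1 p.2 ∧ {p.1, p.2} ⊆ S} : ℝ) =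
      (∑ p : ι × ι with H.Adj p.1 p.2, w p.1 * w p.2) / (4 * c ^ 2) := by
    simp only [← Finset.filter_filter]
    rw [sum_mul_card_filter _ _ _ fun (S : Finset ι) (p : ι × ι) => {p.1, p.2} ⊆ S,
      Finset.sum_div]
    refine Finset.sum_congr rfl fun p hp => ?_
    rw [sum_subsetProb_of_subset, Finset.prod_pair (Finset.mem_filter.1 hp).2.ne,
      div_mul_div_comm]
    ring
  have hle : (∑ i, w i) / (2 * c) ≤ H.indepNum + (∑ i, w i) / (4 * c) := calc
    (∑ i, w i) / (2 * c) = ∑ S, subsetProb q S * (#S : ℝ) := by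
      rw [sum_subsetProb_mul_card, Finset.sum_div]
    _ ≤ ∑ S, subsetProb q S *
        (H.indepNum + #{p : ι × ι | H.Adj p.1 p.2 ∧ {p.1, p.2} ⊆ S} : ℝ) :=
      Finset.sum_le_sum fun S _ => mul_le_mul_of_nonneg_left
        (mod_cast card_le_indepNum_add_card_adj H S) (hprob S)
    _ = H.indepNum + (∑ p : ι × ι with H.Adj p.1 p.2, w p.1 * w p.2) / (4 * c ^ 2) := by
      simp only [mul_add, Finset.sum_add_distrib, hpairs, ← Finset.sum_mul, sum_subsetProb, one_mul]
    _ ≤ H.indepNum + c * (∑ i, w i) / (4 * c ^ 2) := by gcongr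
    _ = H.indepNum + (∑ i, w i) / (4 * c) := by field_simp
  have hhalf : (∑ i, w i) / (2 * c) = 2 * ((∑ i, w i) / (4 * c)) := by field_simp; norm_num
  have hquarter : (∑ i, w i) / (4 * c) ≤ H.indepNum := by linarith
  linarith [(div_le_iff₀ (by positivity)).1 hquarter]

variable {V : Type*} {B : ι → Set V} {w : ι → ℝ} {k : ℕ}

/-- The graph on the index set of `B` in which `i` and `j` are adjacent when `B i` meets `B j`. -/
def intersectionGraph (B : ι → Set V) : SimpleGraph ι where
  Adj i j := i ≠ j ∧ (B i ∩ B j).Nonempty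
  symm := ⟨fun i j ⟨hij, hB⟩ => ⟨hij.symm, Set.inter_comm (B i) (B j) ▸ hB⟩⟩
  loopless := ⟨fun _ h => h.1 rfl⟩

theorem weight_le_one (hne : ∀ i, (B i).Nonempty) (hw₀ : ∀ i, 0 ≤ w i)
    (hw : ∀ x, ∑ i with x ∈ B i, w i ≤ 1) (i : ι) : w i ≤ 1 := by
  obtain ⟨x, hx⟩ := hne i
  have hi : i ∈ ({i | x ∈ B i} : Finset ι) := Finset.mem_filter.2 ⟨Finset.mem_univ i, hx⟩
  exact (Finset.single_le_sum (fun j _ => hw₀ j) hi).trans (hw x)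

-- A point `x` of `B i ∩ B j` witnesses the adjacency whenever both `i` and `j` are sampled and no
-- other `k` with `x ∈ B k` is; the latter has probability at least `1 - ∑ w k / 2 ≥ 1 / 2`.
theorem mul_div_le_sum_subsetProb_crossGraph (hw₀ : ∀ i, 0 ≤ w i) (hw₁ : ∀ i, w i ≤ 1)
    (hw : ∀ x, ∑ i with x ∈ B i, w i ≤ 1) {i j : ι} (hij : (intersectionGraph B).Adj i j) :
    w i * w j / 8 ≤
      ∑ S : Finset ι with (crossGraph B S).Adj i j, subsetProb (fun i => w i / 2) S := by
  obtain ⟨hne, x, hxi, hxj⟩ := hij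
  have hq₀ (i) : 0 ≤ w i / 2 := by linarith [hw₀ i]
  have hq₁ (i) : w i / 2 ≤ 1 := by linarith [hw₁ i]
  let K : Finset ι := {k | x ∈ B k ∧ k ≠ i ∧ k ≠ j}
  have hdisj : Disjoint {i, j} K := by simp [K, Finset.disjoint_left]
  have hK : ∑ k ∈ K, w k / 2 ≤ 1 / 2 := by
    rw [← Finset.sum_div]
    have hsub : K ⊆ ({k | x ∈ B k} : Finset ι) := Finset.monotone_filter_right _ fun k _ hk => hk.1
    linarith [hw x, Finset.sum_le_sum_of_subset_of_nonneg hsub fun k _ _ => hw₀ k]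
  calc w i * w j / 8 = w i / 2 * (w j / 2) * (1 / 2) := by ring
    _ ≤ w i / 2 * (w j / 2) * ∏ k ∈ K, (1 - w k / 2) :=
      mul_le_mul_of_nonneg_left (by linarith [one_sub_sum_le_prod_one_sub K hq₀ hq₁])
        (mul_nonneg (hq₀ i) (hq₀ j))
    _ = ∑ S : Finset ι with {i, j} ⊆ S ∧ Disjoint K S, subsetProb (fun i => w i / 2) S := by
      rw [sum_subsetProb_of_subset_of_disjoint _ hdisj, Finset.prod_pair hne]
    _ ≤ ∑ S : Finset ι with (crossGraph B S).Adj i j, subsetProb (fun i => w i / 2) S := by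
      refine Finset.sum_le_sum_of_subset_of_nonneg (Finset.monotone_filter_right _ ?_)
        fun S _ _ => subsetProb_nonneg hq₀ hq₁ S
      rintro S - ⟨hijS, hKS⟩
      rw [Finset.insert_subset_iff, Finset.singleton_subset_iff] at hijS
      refine ⟨hne, hijS.1, hijS.2, x, ⟨hxi, hxj⟩, fun k hk hxk => ?_⟩
      by_contra! hkij
      exact Finset.disjoint_right.1 hKS hk (by simp [K, hxk, hkij])

theorem sum_sum_subsetProb_adj_le {H : Finset ι → SimpleGraph ι}
    (hsparse : ∀ S, #(H S).edgeFinset ≤ k * #S) (hq₀ : ∀ i, 0 ≤ q i) (hq₁ : ∀ i, q i ≤ 1) :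
    ∑ p : ι × ι, ∑ S : Finset ι with (H S).Adj p.1 p.2, subsetProb q S ≤ 2 * k * ∑ i, q i := by
  calc ∑ p : ι × ι, ∑ S : Finset ι with (H S).Adj p.1 p.2, subsetProb q S
      = ∑ S, subsetProb q S * (#{p : ι × ι | (H S).Adj p.1 p.2} : ℝ) :=
        (sum_mul_card_filter _ _ _ fun (S : Finset ι) (p : ι × ι) => (H S).Adj p.1 p.2).symm
    _ ≤ ∑ S, subsetProb q S * (2 * k * #S : ℝ) := by
        refine Finset.sum_le_sum fun S _ =>
          mul_le_mul_of_nonneg_left ?_ (subsetProb_nonneg hq₀ hq₁ S)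
        rw [card_filter_adj, mul_assoc]
        exact_mod_cast Nat.mul_le_mul_left 2 (hsparse S)
    _ = 2 * k * ∑ S, subsetProb q S * (#S : ℝ) := by
        rw [Finset.mul_sum]
        exact Finset.sum_congr rfl fun S _ => by ring
    _ = 2 * k * ∑ i, q i := by rw [sum_subsetProb_mul_card]

-- Clarkson and Shor: for a random `S` containing `i` with probability `w i / 2`, compare the
-- expected number of edges of `crossGraph B S` with the expected size of `S`.
theorem sum_intersecting_mul_le (hsparse : ∀ S : Finset ι, #(crossGraph B S).edgeFinset ≤ k * #S)
    (hw₀ : ∀ i, 0 ≤ w i) (hw₁ : ∀ i, w i ≤ 1) (hw : ∀ x, ∑ i with x ∈ B i, w i ≤ 1) :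
    ∑ p : ι × ι with (intersectionGraph B).Adj p.1 p.2, w p.1 * w p.2 ≤
      8 * k * ∑ i, w i := by
  have hq₀ (i) : 0 ≤ w i / 2 := by linarith [hw₀ i]
  have hq₁ (i) : w i / 2 ≤ 1 := by linarith [hw₁ i]
  have hle : ∑ p : ι × ι with (intersectionGraph B).Adj p.1 p.2, w p.1 * w p.2 / 8 ≤
      2 * k * ∑ i, w i / 2 := calc
    ∑ p : ι × ι with (intersectionGraph B).Adj p.1 p.2, w p.1 * w p.2 / 8
      ≤ ∑ p : ι × ι with (intersectionGraph B).Adj p.1 p.2,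
          ∑ S : Finset ι with (crossGraph B S).Adj p.1 p.2, subsetProb (fun i => w i / 2) S :=
        Finset.sum_le_sum fun p hp =>
          mul_div_le_sum_subsetProb_crossGraph hw₀ hw₁ hw (Finset.mem_filter.1 hp).2
    _ ≤ ∑ p : ι × ι, ∑ S : Finset ι with (crossGraph B S).Adj p.1 p.2,
          subsetProb (fun i => w i / 2) S :=
        Finset.sum_le_sum_of_subset_of_nonneg (Finset.filter_subset _ _) fun p _ _ =>
          Finset.sum_nonneg fun S _ => subsetProb_nonneg hq₀ hq₁ S
    _ ≤ 2 * k * ∑ i, w i / 2 := sum_sum_subsetProb_adj_le hsparse hq₀ hq₁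
  rw [← Finset.sum_div, ← Finset.sum_div] at hle
  linarith

theorem sum_le_mul_indepNum_intersectionGraph (hk : 0 < k)
    (hsparse : ∀ S : Finset ι, #(crossGraph B S).edgeFinset ≤ k * #S)
    (hne : ∀ i, (B i).Nonempty) (hw₀ : ∀ i, 0 ≤ w i) (hw : ∀ x, ∑ i with x ∈ B i, w i ≤ 1) :
    ∑ i, w i ≤ 32 * k * (intersectionGraph B).indepNum := by
  have hk' : (1 : ℝ) ≤ k := by exact_mod_cast hk
  have hw₁ := weight_le_one hne hw₀ hw
  linarith [sum_le_mul_indepNum (by linarith) hw₀ hw₁ (sum_intersecting_mul_le hsparse hw₀ hw₁ hw)]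

theorem card_edgeFinset_crossGraph_le {G : SimpleGraph V} {t : ℕ}
    (hG : ¬GraphMinor (⊤ : SimpleGraph (Fin t)) G) (hball : ∀ i, ∃ v r, B i = G.gBall v r)
    (hanti : ∀ i j, B i ⊆ B j → i = j) (S : Finset ι) :
    #(crossGraph B S).edgeFinset ≤ ktDensity t * #S := by
  have hminor : ¬GraphMinor (⊤ : SimpleGraph (Fin t)) ((crossGraph B S).induce S) :=
    fun h => hG (h.trans (graphMinor_crossGraph hball hanti S))
  have hsupport : (crossGraph B S).support ⊆ S := fun i ⟨j, hij⟩ => hij.2.1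
  convert! card_edgeFinset_le_of_not_graphMinor_top hminor using 1
  · convert! (SimpleGraph.card_edgeFinset_induce_of_support_subset hsupport).symm
  · simp

end RandomSubsets

section Duality

theorem exists_vecMul_le_mulVec {m n : Type*} [Fintype m] [Fintype n] [Nonempty m] [Nonempty n]
    (A : Matrix m n ℝ) :
    ∃ x ∈ stdSimplex ℝ m, ∃ y ∈ stdSimplex ℝ n, ∀ i j, Matrix.vecMul x A j ≤ A.mulVec y i := by
  classical
  let payoff : (m → ℝ) →ₗ[ℝ] (n → ℝ) →ₗ[ℝ] ℝ := Matrix.toLinearMap₂' ℝ A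
  obtain ⟨x, hx, y, hy, hsaddle⟩ := Sion.exists_isSaddlePointOn
    (X := stdSimplex ℝ m) (Y := stdSimplex ℝ n) (f := fun x y => payoff x y)
    (isPathConnected_stdSimplex m).nonempty (convex_stdSimplex ℝ m) (isCompact_stdSimplex ℝ m)
    (fun y _ => (payoff.flip y).continuous_of_finiteDimensional.continuousOn.lowerSemicontinuousOn)
    (fun y _ => ((payoff.flip y).convexOn (convex_stdSimplex ℝ m)).quasiconvexOn)
    (convex_stdSimplex ℝ n) (isPathConnected_stdSimplex n).nonempty (isCompact_stdSimplex ℝ n)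
    (fun x _ => (payoff x).continuous_of_finiteDimensional.continuousOn.upperSemicontinuousOn)
    (fun x _ => ((payoff x).concaveOn (convex_stdSimplex ℝ n)).quasiconcaveOn)
  refine ⟨x, hx, y, hy, fun i j => ?_⟩
  calc Matrix.vecMul x A j = payoff x (Pi.single j 1) := by
        rw [Matrix.toLinearMap₂'_apply', Matrix.mulVec_single_one]
        rfl
    _ ≤ payoff (Pi.single i 1) y :=
        hsaddle _ (single_mem_stdSimplex ℝ i) _ (single_mem_stdSimplex ℝ j)
    _ = A.mulVec y i := by rw [Matrix.toLinearMap₂'_apply', single_one_dotProduct]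

open scoped Classical in
theorem exists_fractional_transversal {V ι : Type*} [Fintype V] [Fintype ι] [Nonempty ι]
    {B : ι → Set V} (hne : ∀ i, (B i).Nonempty) {T : ℝ}
    (hT : ∀ w : ι → ℝ, (∀ i, 0 ≤ w i) → (∀ x, ∑ i with x ∈ B i, w i ≤ 1) → ∑ i, w i < T) :
    ∃ μ ∈ stdSimplex ℝ V, ∀ i, 1 ≤ T * ∑ v with v ∈ B i, μ v := by
  have : Nonempty V := (hne (Classical.arbitrary ι)).to_type
  obtain ⟨x, hx, μ, hμ, hle⟩ := exists_vecMul_le_mulVec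
    (Matrix.of fun i v => if v ∈ B i then (1 : ℝ) else 0)
  simp only [Matrix.vecMul, Matrix.mulVec, dotProduct, Matrix.of_apply, mul_ite, ite_mul, mul_one,
    one_mul, mul_zero, zero_mul, ← Finset.sum_filter] at hle
  have hT₀ : 0 < T := by simpa using hT 0 (by simp) (by simp)
  refine ⟨μ, hμ, fun i => ?_⟩
  by_contra! hi
  have hlt := hT (fun i => T * x i) (fun i => mul_nonneg hT₀.le (hx.1 i)) fun v => by
    rw [← Finset.mul_sum]
    exact (mul_le_mul_of_nonneg_left (hle i v) hT₀.le).trans hi.le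
  rw [← Finset.mul_sum, hx.2, mul_one] at hlt
  exact hlt.false

end Duality

section EpsilonNets

open scoped Classical Finset

theorem sum_filter_le_sum_sum_filter {α β : Type*} [Fintype β] {s : Finset α} {f : β → ℝ}
    {p : β → Prop} {rel : α → β → Prop} {_ : DecidablePred p} (hf : ∀ b, 0 ≤ f b)
    (hp : ∀ b, p b → ∃ a ∈ s, rel a b) :
    ∑ b with p b, f b ≤ ∑ a ∈ s, ∑ b with rel a b, f b := by
  simp only [Finset.sum_filter]
  rw [Finset.sum_comm]
  refine Finset.sum_le_sum fun b _ => ?_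
  have hterm (a : α) : 0 ≤ if rel a b then f b else 0 := ite_nonneg (hf b) le_rfl
  split_ifs with h
  · obtain ⟨a, ha, hab⟩ := hp b h
    calc f b = if rel a b then f b else 0 := (if_pos hab).symm
      _ ≤ ∑ a ∈ s, if rel a b then f b else 0 :=
        Finset.single_le_sum (f := fun a => if rel a b then f b else 0) (fun a _ => hterm a) ha
  · exact Finset.sum_nonneg fun a _ => hterm a

section Traces

variable {V α : Type*} [Fintype α] {d : ℕ}

/-- The traces of the members of `𝓐` on a sequence of points `z`, as sets of indices. -/
noncomputable def sampleTrace (𝓐 : Finset (Finset V)) (z : α → V) : Finset (Finset α) :=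
  𝓐.image fun A => ({a | z a ∈ A} : Finset α)

theorem filter_mem_sampleTrace {𝓐 : Finset (Finset V)} {A : Finset V} (hA : A ∈ 𝓐) (z : α → V) :
    ({a | z a ∈ A} : Finset α) ∈ sampleTrace 𝓐 z :=
  Finset.mem_image_of_mem _ hA

theorem vcDim_sampleTrace_le (𝓐 : Finset (Finset V)) (z : α → V) :
    (sampleTrace 𝓐 z).vcDim ≤ 𝓐.vcDim := by
  refine Finset.sup_le fun s hs => ?_
  replace hs := Finset.mem_shatterer.1 hs
  have hinj : Set.InjOn z s := fun a ha b hb hab => by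
    obtain ⟨u, hu, hsu⟩ := hs.exists_inter_eq_singleton ha
    obtain ⟨A, -, rfl⟩ := Finset.mem_image.1 hu
    have haA : a ∈ s ∩ ({a | z a ∈ A} : Finset α) := hsu ▸ Finset.mem_singleton_self a
    have hbA : b ∈ s ∩ ({a | z a ∈ A} : Finset α) := by
      simp only [Finset.mem_inter, Finset.mem_filter_univ] at haA ⊢
      exact ⟨hb, hab ▸ haA.2⟩
    exact (Finset.mem_singleton.1 (hsu ▸ hbA)).symm
  rw [← Finset.card_image_of_injOn hinj]
  refine Finset.Shatters.card_le_vcDim fun u hu => ?_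
  obtain ⟨u, hus, rfl⟩ := Finset.subset_image_iff.1 hu
  obtain ⟨w, hw, hsw⟩ := hs hus
  obtain ⟨A, hA, rfl⟩ := Finset.mem_image.1 hw
  refine ⟨A, hA, ?_⟩
  rw [← hsw]
  ext v
  simp only [Finset.mem_inter, Finset.mem_image, Finset.mem_filter_univ]
  aesop

theorem card_le_of_vcDim_le {𝓕 : Finset (Finset α)} (hd : 𝓕.vcDim ≤ d) :
    #𝓕 ≤ (Fintype.card α + 1) ^ d := by
  calc #𝓕 ≤ ∑ k ∈ Finset.Iic 𝓕.vcDim, (Fintype.card α).choose k :=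
        (Finset.card_le_card_shatterer 𝓕).trans Finset.card_shatterer_le_sum_vcDim
    _ ≤ ∑ k ∈ Finset.range (d + 1), (Fintype.card α).choose k :=
        Finset.sum_le_sum_of_subset fun k hk => by
          rw [Finset.mem_Iic] at hk
          exact Finset.mem_range_succ_iff.2 (hk.trans hd)
    _ ≤ ∑ k ∈ Finset.range (d + 1), Fintype.card α ^ k * 1 ^ (d - k) * d.choose k := by
        refine Finset.sum_le_sum fun k hk => ?_
        rw [one_pow, mul_one]
        exact (Nat.choose_le_pow _ _).trans
          (Nat.le_mul_of_pos_right _ (Nat.choose_pos (Finset.mem_range_succ_iff.1 hk)))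
    _ = (Fintype.card α + 1) ^ d := (add_pow _ _ _).symm

end Traces

section Sampling

variable {V α β : Type*} [Fintype V] [Fintype α] [Fintype β] {μ : V → ℝ}

/-- The probability that a family of independent points of `V`, indexed by `α` and distributed
according to `μ`, satisfies `p`. -/
noncomputable def sampleProb (μ : V → ℝ) (p : (α → V) → Prop) : ℝ :=
  ∑ z with p z, ∏ a, μ (z a)

theorem sampleProb_mono (hμ : μ ∈ stdSimplex ℝ V) {p p' : (α → V) → Prop} (h : ∀ z, p z → p' z) :
    sampleProb μ p ≤ sampleProb μ p' :=
  Finset.sum_le_sum_of_subset_of_nonneg (Finset.monotone_filter_right _ fun z _ => h z)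
    fun z _ _ => Finset.prod_nonneg fun a _ => hμ.1 (z a)

theorem sampleProb_forall_mem (μ : V → ℝ) (A : α → Finset V) :
    sampleProb μ (fun z => ∀ a, z a ∈ A a) = ∏ a, ∑ v ∈ A a, μ v := by
  rw [Finset.prod_univ_sum]
  refine Finset.sum_congr ?_ fun _ _ => rfl
  ext z
  simp

theorem sum_prod_apply_eq_one (hμ : μ ∈ stdSimplex ℝ V) : ∑ z : α → V, ∏ a, μ (z a) = 1 := by
  simpa [sampleProb, hμ.2] using sampleProb_forall_mem μ fun _ : α => Finset.univ

theorem sampleProb_apply_mem (hμ : μ ∈ stdSimplex ℝ V) (a : α) (A : Finset V) :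
    sampleProb μ (fun z : α → V => z a ∈ A) = ∑ v ∈ A, μ v := by
  have h := sampleProb_forall_mem μ (Function.update (fun _ : α => Finset.univ) a A)
  rw [Finset.prod_eq_single a (fun b _ hb => by rw [Function.update_of_ne hb, hμ.2]) (by simp),
    Function.update_self] at h
  rw [← h]
  refine congrArg _ (funext fun z => propext ⟨fun hz b => ?_, fun hz => by simpa using hz a⟩)
  obtain rfl | hb := eq_or_ne b a
  · simpa using hz
  · simp [hb]

theorem sum_prod_apply_mul_card_hits (hμ : μ ∈ stdSimplex ℝ V) (A : Finset V) :
    ∑ z : α → V, (∏ a, μ (z a)) * (#{a | z a ∈ A} : ℝ) = Fintype.card α * ∑ v ∈ A, μ v := by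
  rw [sum_mul_card_filter _ _ _ fun (z : α → V) a => z a ∈ A]
  calc _ = ∑ _a : α, ∑ v ∈ A, μ v := Finset.sum_congr rfl fun a _ => by
        rw [← sampleProb_apply_mem hμ a A, sampleProb]
        congr!
    _ = Fintype.card α * ∑ v ∈ A, μ v := by simp

-- Reverse Markov: the expected number of hits is at least `2 g`, out of `2 T g` points.
theorem one_le_mul_sampleProb_hits (hμ : μ ∈ stdSimplex ℝ V) {A : Finset V} {T g : ℕ} (hg : 0 < g)
    (hA : 1 ≤ T * ∑ v ∈ A, μ v) (hα : Fintype.card α = 2 * T * g) :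
    1 ≤ 2 * T * sampleProb μ (fun z : α → V => g ≤ #{a | z a ∈ A}) := by
  have hpoint (z : α → V) : (∏ a, μ (z a)) * (#{a | z a ∈ A} : ℝ) ≤ g * ∏ a, μ (z a) +
      2 * T * g * if g ≤ #{a | z a ∈ A} then ∏ a, μ (z a) else 0 := by
    have hz : 0 ≤ ∏ a, μ (z a) := Finset.prod_nonneg fun a _ => hμ.1 (z a)
    split_ifs with hhits
    · have hcard : (#{a | z a ∈ A} : ℝ) ≤ 2 * T * g := by
        exact_mod_cast (Finset.card_le_univ _).trans_eq hα
      linarith [mul_le_mul_of_nonneg_left hcard hz, mul_nonneg g.cast_nonneg hz]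
    · have hcard : (#{a | z a ∈ A} : ℝ) ≤ g := by exact_mod_cast (not_le.1 hhits).le
      linarith [mul_le_mul_of_nonneg_left hcard hz]
  have hle : 2 * T * g * ∑ v ∈ A, μ v ≤
      g + 2 * T * g * sampleProb μ (fun z : α → V => g ≤ #{a | z a ∈ A}) := calc
    2 * T * g * ∑ v ∈ A, μ v = ∑ z : α → V, (∏ a, μ (z a)) * (#{a | z a ∈ A} : ℝ) := by
      rw [sum_prod_apply_mul_card_hits hμ, hα]
      push_cast
      rfl
    _ ≤ _ := Finset.sum_le_sum fun z _ => hpoint z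
    _ = _ := by
      rw [Finset.sum_add_distrib, ← Finset.mul_sum, ← Finset.mul_sum, sum_prod_apply_eq_one hμ,
        mul_one, ← Finset.sum_filter, sampleProb]
      congr!
  have hg' : (0 : ℝ) < g := by exact_mod_cast hg
  refine le_of_mul_le_mul_left ?_ hg'
  linarith [mul_le_mul_of_nonneg_left hA hg'.le]

theorem sampleProb_sum (μ : V → ℝ) (p : (α ⊕ β → V) → Prop) :
    sampleProb μ p = ∑ x : α → V, (∏ a, μ (x a)) * sampleProb μ (fun y => p (Sum.elim x y)) := by
  simp only [sampleProb, Finset.sum_filter, Finset.mul_sum]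
  rw [← Fintype.sum_prod_type' fun (x : α → V) (y : β → V) =>
    (∏ a, μ (x a)) * if p (Sum.elim x y) then ∏ b, μ (y b) else 0]
  refine Finset.sum_equiv (Equiv.sumArrowEquivProdArrow α β V) (by simp) fun z _ => ?_
  simp [Equiv.sumArrowEquivProdArrow, Fintype.prod_sum_type, Sum.elim_comp_inl_inr z]

theorem sampleProb_comp_perm (μ : V → ℝ) (p : (α → V) → Prop) (e : Equiv.Perm α) :
    sampleProb μ (fun z => p (z ∘ e)) = sampleProb μ p := by
  simp only [sampleProb, Finset.sum_filter]
  refine Fintype.sum_equiv (e.symm.arrowCongr (Equiv.refl V)) _ _ fun z => ?_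
  simp [Equiv.arrowCongr, Equiv.prod_comp e fun a => μ (z a)]

theorem sampleProb_le_of_random_perm (hμ : μ ∈ stdSimplex ℝ V) {p : (α → V) → Prop} {δ : ℝ}
    {ω : β → ℝ} (hω : ∑ b, ω b = 1) (e : β → Equiv.Perm α)
    (hδ : ∀ z, ∑ b with p (z ∘ e b), ω b ≤ δ) : sampleProb μ p ≤ δ := by
  calc sampleProb μ p = ∑ b, ω b * sampleProb μ (fun z => p (z ∘ e b)) := by
        simp only [sampleProb_comp_perm, ← Finset.sum_mul, hω, one_mul]
    _ = ∑ z, (∏ a, μ (z a)) * ∑ b with p (z ∘ e b), ω b := by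
        simp only [sampleProb, Finset.sum_filter, Finset.mul_sum, mul_ite, mul_zero]
        rw [Finset.sum_comm]
        simp only [mul_comm]
    _ ≤ ∑ z : α → V, (∏ a, μ (z a)) * δ := Finset.sum_le_sum fun z _ =>
        mul_le_mul_of_nonneg_left (hδ z) (Finset.prod_nonneg fun a _ => hμ.1 (z a))
    _ = δ := by rw [← Finset.sum_mul, sum_prod_apply_eq_one hμ, one_mul]

end Sampling

section DoubleSampling

variable {V α : Type*}

/-- The first half of the sample `z` misses `A`, while at least `g` points of the second half
belong to `A`. -/
def MissesThenHits [Fintype α] (g : ℕ) (A : Set V) (z : α ⊕ α → V) : Prop :=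
  (∀ a, z (Sum.inl a) ∉ A) ∧ g ≤ #{a | z (Sum.inr a) ∈ A}

/-- The involution of two copies of `α` exchanging both copies of each element of `J`. -/
noncomputable def swapHalves (J : Finset α) : Equiv.Perm (α ⊕ α) :=
  Function.Involutive.toPerm (fun x => if Sum.elim id id x ∈ J then x.swap else x) fun x => by
    obtain a | a := x <;> by_cases ha : a ∈ J <;> simp [ha]

theorem swapHalves_inl (J : Finset α) (a : α) :
    swapHalves J (Sum.inl a) = if a ∈ J then Sum.inr a else Sum.inl a := rfl

theorem swapHalves_inr (J : Finset α) (a : α) :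
    swapHalves J (Sum.inr a) = if a ∈ J then Sum.inl a else Sum.inr a := rfl

variable [Fintype α]

-- The swaps are forced at every point having a copy in `A`, and there are at least `g` of them.
theorem sum_subsetProb_missesThenHits_swapHalves_le (g : ℕ) (A : Set (α ⊕ α)) :
    ∑ J with MissesThenHits g A (swapHalves J), subsetProb (fun _ => 1 / 2) J ≤ (1 / 2) ^ g := by
  set A₁ : Finset α := {a | Sum.inl a ∈ A} with hA₁
  set A₂ : Finset α := {a | Sum.inr a ∈ A} with hA₂
  have hforced (J : Finset α) (hJ : MissesThenHits g A (swapHalves J)) :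
      A₁ ⊆ J ∧ Disjoint A₂ J := by
    refine ⟨fun a ha => ?_, Finset.disjoint_left.2 fun a ha haJ => ?_⟩
    · by_contra haJ
      exact hJ.1 a (by simpa [swapHalves_inl, haJ, hA₁] using ha)
    · exact hJ.1 a (by simpa [swapHalves_inl, haJ, hA₂] using ha)
  obtain hnone | ⟨J, hJ⟩ := Finset.eq_empty_or_nonempty
    ({J | MissesThenHits g A (swapHalves J)} : Finset (Finset α))
  · rw [hnone, Finset.sum_empty]
    positivity
  replace hJ : MissesThenHits g A (swapHalves J) := (Finset.mem_filter.1 hJ).2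
  have hhits : g ≤ #A₁ + #A₂ := by
    refine hJ.2.trans ((Finset.card_le_card fun a ha => ?_).trans (Finset.card_union_le _ _))
    replace ha := (Finset.mem_filter.1 ha).2
    rw [swapHalves_inr] at ha
    by_cases haJ : a ∈ J
    · exact Finset.mem_union_left _ (by simpa [haJ, hA₁] using ha)
    · exact Finset.mem_union_right _ (by simpa [haJ, hA₂] using ha)
  have hdisj : Disjoint A₁ A₂ := (hforced J hJ).2.symm.mono_left (hforced J hJ).1
  calc ∑ J with MissesThenHits g A (swapHalves J), subsetProb (fun _ => 1 / 2) J
      ≤ ∑ J with A₁ ⊆ J ∧ Disjoint A₂ J, subsetProb (fun _ => 1 / 2) J :=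
        Finset.sum_le_sum_of_subset_of_nonneg
          (Finset.monotone_filter_right _ fun J _ => hforced J)
          fun J _ _ => subsetProb_nonneg (fun _ => by norm_num) (fun _ => by norm_num) J
    _ = (1 / 2) ^ (#A₁ + #A₂) := by
        rw [sum_subsetProb_of_subset_of_disjoint _ hdisj, Finset.prod_const, Finset.prod_const,
          pow_add]
        norm_num
    _ ≤ (1 / 2) ^ g := pow_le_pow_of_le_one (by norm_num) (by norm_num) hhits

variable [Fintype V] {μ : V → ℝ} {𝓐 : Finset (Finset V)} {d : ℕ}

theorem sampleProb_missesThenHits_le (hμ : μ ∈ stdSimplex ℝ V) (hd : 𝓐.vcDim ≤ d) (g : ℕ) :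
    sampleProb μ (fun z : α ⊕ α → V => ∃ A ∈ 𝓐, MissesThenHits g A z) ≤
      (2 * Fintype.card α + 1) ^ d * (1 / 2) ^ g := by
  refine sampleProb_le_of_random_perm hμ (sum_subsetProb fun _ : α => 1 / 2) swapHalves fun z => ?_
  have hprob₀ (J : Finset α) : 0 ≤ subsetProb (fun _ => 1 / 2) J :=
    subsetProb_nonneg (fun _ => by norm_num) (fun _ => by norm_num) J
  calc _ ≤ ∑ A ∈ sampleTrace 𝓐 z, ∑ J with MissesThenHits g A (swapHalves J),
          subsetProb (fun _ => 1 / 2) J :=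
        sum_filter_le_sum_sum_filter hprob₀ fun J ⟨A, hA, hmiss⟩ =>
          ⟨_, filter_mem_sampleTrace hA z, by simpa [MissesThenHits] using hmiss⟩
    _ ≤ #(sampleTrace 𝓐 z) * (1 / 2) ^ g := by
        rw [← nsmul_eq_mul]
        exact Finset.sum_le_card_nsmul _ _ _ fun A _ =>
          sum_subsetProb_missesThenHits_swapHalves_le g (A : Set (α ⊕ α))
    _ ≤ (2 * Fintype.card α + 1) ^ d * (1 / 2) ^ g := by
        refine mul_le_mul_of_nonneg_right ?_ (by positivity)
        have hcard := card_le_of_vcDim_le ((vcDim_sampleTrace_le 𝓐 z).trans hd)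
        rw [Fintype.card_sum, ← two_mul] at hcard
        exact_mod_cast hcard

-- Haussler and Welzl: if every first half of the sample misses some `A`, the second half is fairly
-- likely to hit that `A` often; exchanging the two halves at random points shows that this is rare.
theorem exists_forall_exists_apply_mem (hμ : μ ∈ stdSimplex ℝ V) {T g : ℕ} (hg : 0 < g)
    (hα : Fintype.card α = 2 * T * g) (hsize : 2 * T * (4 * T * g + 1) ^ d < 2 ^ g)
    (hd : 𝓐.vcDim ≤ d) (h𝓐 : ∀ A ∈ 𝓐, 1 ≤ T * ∑ v ∈ A, μ v) :
    ∃ x : α → V, ∀ A ∈ 𝓐, ∃ a, x a ∈ A := by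
  by_contra! hmiss
  let bad (z : α ⊕ α → V) : Prop := ∃ A ∈ 𝓐, MissesThenHits g A z
  have hbad : 1 ≤ 2 * T * sampleProb μ bad := by
    calc 1 = ∑ x : α → V, (∏ a, μ (x a)) * 1 := by simp only [mul_one, sum_prod_apply_eq_one hμ]
      _ ≤ ∑ x : α → V, (∏ a, μ (x a)) *
            (2 * T * sampleProb μ fun y => bad (Sum.elim x y)) := by
          refine Finset.sum_le_sum fun x _ => mul_le_mul_of_nonneg_left ?_
            (Finset.prod_nonneg fun a _ => hμ.1 (x a))
          obtain ⟨A, hA, hx⟩ := hmiss x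
          refine (one_le_mul_sampleProb_hits hμ hg (h𝓐 A hA) hα).trans ?_
          exact mul_le_mul_of_nonneg_left
            (sampleProb_mono hμ fun y hy => ⟨A, hA, hx, by simpa using hy⟩) (by positivity)
      _ = 2 * T * sampleProb μ bad := by
          rw [sampleProb_sum, Finset.mul_sum]
          exact Finset.sum_congr rfl fun x _ => mul_left_comm _ _ _
  refine absurd hbad (not_le.2 ?_)
  calc 2 * T * sampleProb μ bad
      ≤ 2 * T * ((2 * Fintype.card α + 1) ^ d * (1 / 2) ^ g) :=
        mul_le_mul_of_nonneg_left (sampleProb_missesThenHits_le hμ hd g) (by positivity)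
    _ = 2 * T * (4 * T * g + 1) ^ d / 2 ^ g := by
        rw [hα, one_div, inv_pow]
        push_cast
        ring
    _ < 1 := (div_lt_one (by positivity)).2 (by exact_mod_cast hsize)

theorem two_mul_mul_pow_lt_two_pow {T d : ℕ} (hd : 1 ≤ d) (hdT : d ≤ T) :
    2 * T * (4 * T * (16 * d * (Nat.log 2 T + 1)) + 1) ^ d <
      2 ^ (16 * d * (Nat.log 2 T + 1)) := by
  set L := Nat.log 2 T + 1 with hL
  have hTL : T < 2 ^ L := Nat.lt_pow_succ_log_self one_lt_two T
  have hLL : L < 2 ^ L := Nat.lt_two_pow_self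
  have hbase : 4 * T * (16 * d * L) + 1 ≤ 2 ^ (3 * L + 7) := by
    calc 4 * T * (16 * d * L) + 1 ≤ 2 ^ 7 * (T * T * L) := by
          have hdTL : T * d * L ≤ T * T * L := by gcongr
          have hpos : 0 < T * T * L := Nat.mul_pos (Nat.mul_pos (by omega) (by omega)) (by omega)
          linarith
      _ ≤ 2 ^ 7 * (2 ^ L * 2 ^ L * 2 ^ L) := by gcongr
      _ = 2 ^ (3 * L + 7) := by ring
  calc 2 * T * (4 * T * (16 * d * L) + 1) ^ d ≤ 2 * 2 ^ L * (2 ^ (3 * L + 7)) ^ d := by gcongr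
    _ = 2 ^ (1 + L + (3 * L + 7) * d) := by rw [← pow_succ', ← pow_mul, ← pow_add, add_comm L]
    _ < 2 ^ (16 * d * L) := Nat.pow_lt_pow_right one_lt_two (by nlinarith)

theorem exists_epsilonNet (hμ : μ ∈ stdSimplex ℝ V) {T : ℕ} (hd₁ : 1 ≤ d) (hdT : d ≤ T)
    (hd : 𝓐.vcDim ≤ d) (h𝓐 : ∀ A ∈ 𝓐, 1 ≤ T * ∑ v ∈ A, μ v) :
    ∃ X : Finset V, #X ≤ 32 * T * d * (Nat.log 2 T + 1) ∧ ∀ A ∈ 𝓐, ∃ v ∈ X, v ∈ A := by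
  obtain ⟨x, hx⟩ := exists_forall_exists_apply_mem hμ (by positivity) (Fintype.card_fin _)
    (two_mul_mul_pow_lt_two_pow hd₁ hdT) hd h𝓐
  refine ⟨Finset.univ.image x, Finset.card_image_le.trans (le_of_eq ?_), fun A hA => ?_⟩
  · rw [Finset.card_univ, Fintype.card_fin]
    ring
  · obtain ⟨a, ha⟩ := hx A hA
    exact ⟨x a, Finset.mem_image_of_mem x (Finset.mem_univ a), ha⟩

end DoubleSampling

end EpsilonNets

section BallHypergraphs

open scoped Classical Finset

variable {V : Type*} {G : SimpleGraph V} {t : ℕ}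

theorem mem_gBall_self (G : SimpleGraph V) (v : V) (r : ℕ) : v ∈ G.gBall v r :=
  ⟨.rfl, by simp⟩

theorem two_le_of_not_graphMinor_top [Nonempty V]
    (hG : ¬GraphMinor (⊤ : SimpleGraph (Fin t)) G) : 2 ≤ t := by
  by_contra! ht
  have : Subsingleton (Fin t) := Fin.subsingleton_iff_le_one.2 (Nat.le_of_lt_succ ht)
  exact hG (.of_subsingleton _ _)

theorem exists_transversal_of_balls [Finite V] {ι : Type*} [Finite ι] [Nonempty ι]
    {B : ι → Set V}
    (hG : ¬GraphMinor (⊤ : SimpleGraph (Fin t)) G) (hball : ∀ i, ∃ v r, B i = G.gBall v r)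
    (hanti : ∀ i j, B i ⊆ B j → i = j) {T : ℕ}
    (hT : T = 64 * (ktDensity t * (intersectionGraph B).indepNum)) :
    ∃ X : Finset V, #X ≤ 32 * T * t * (Nat.log 2 T + 1) ∧ ∀ i, ∃ v ∈ X, v ∈ B i := by
  have := Fintype.ofFinite V
  have := Fintype.ofFinite ι
  have hne (i : ι) : (B i).Nonempty := by
    obtain ⟨v, r, hB⟩ := hball i
    exact ⟨v, hB ▸ mem_gBall_self G v r⟩
  have : Nonempty V := (hne (Classical.arbitrary ι)).to_type
  have ht : 2 ≤ t := two_le_of_not_graphMinor_top hG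
  have htk : t ≤ ktDensity t := by
    rw [ktDensity]
    nlinarith
  have hν : 1 ≤ (intersectionGraph B).indepNum := by
    have hsingle : (intersectionGraph B).IsIndepSet ({Classical.arbitrary ι} : Finset ι) := by simp
    simpa using hsingle.card_le_indepNum
  have hkν : ktDensity t ≤ ktDensity t * (intersectionGraph B).indepNum :=
    Nat.le_mul_of_pos_right _ hν
  obtain ⟨μ, hμ, hcover⟩ := exists_fractional_transversal hne (T := T) fun w hw₀ hw => by
    have hsparse := card_edgeFinset_crossGraph_le hG hball hanti
    refine (sum_le_mul_indepNum_intersectionGraph (by omega) hsparse hne hw₀ hw).trans_lt ?_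
    rw [mul_assoc]
    exact_mod_cast (show 32 * (ktDensity t * (intersectionGraph B).indepNum) < T by omega)
  let 𝓐 : Finset (Finset V) := Finset.univ.image fun i => (B i).toFinset
  have hvc : 𝓐.vcDim ≤ t := vcDim_le_of_not_graphMinor_top hG fun A hA => by
    obtain ⟨i, -, rfl⟩ := Finset.mem_image.1 hA
    simpa using hball i
  obtain ⟨X, hX, hmeet⟩ := exists_epsilonNet hμ (by omega) (by omega : t ≤ T) hvc fun A hA => by
    obtain ⟨i, -, rfl⟩ := Finset.mem_image.1 hA
    convert! hcover i using 3
    ext v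
    simp
  refine ⟨X, hX, fun i => ?_⟩
  simpa using hmeet _ (Finset.mem_image_of_mem _ (Finset.mem_univ i))

variable [Fintype V] {E : Set (Set V)}

theorem card_le_matchingNumber {M : Finset (Set V)} (hM : ↑M ⊆ E)
    (hdisj : (M : Set (Set V)).Pairwise Disjoint) : #M ≤ matchingNumber E :=
  le_csSup ⟨Fintype.card (Set V), by rintro _ ⟨M', -, -, rfl⟩; exact M'.card_le_univ⟩
    ⟨M, hM, hdisj, rfl⟩

theorem transversalNumber_le_card {X : Finset V} (hX : ∀ e ∈ E, ∃ v ∈ X, v ∈ e) :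
    transversalNumber E ≤ #X :=
  Nat.sInf_le ⟨X, hX, rfl⟩

theorem transversalNumber_empty : transversalNumber (∅ : Set (Set V)) = 0 :=
  Nat.le_zero.1 (transversalNumber_le_card (X := ∅) (by simp))

theorem one_le_matchingNumber (hE : E.Nonempty) : 1 ≤ matchingNumber E := by
  obtain ⟨e, he⟩ := hE
  simpa using card_le_matchingNumber (M := {e}) (by simpa using he) (by simp)

theorem indepNum_intersectionGraph_le_matchingNumber {ι : Type*} [Finite ι] {B : ι → Set V}
    (hB : ∀ i, B i ∈ E) (hinj : B.Injective) :
    (intersectionGraph B).indepNum ≤ matchingNumber E := by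
  have := Fintype.ofFinite ι
  obtain ⟨S, hS⟩ := (intersectionGraph B).exists_isNIndepSet_indepNum
  rw [← hS.card_eq, ← Finset.card_image_of_injective S hinj]
  refine card_le_matchingNumber (by simp [Set.subset_def, hB]) ?_
  rw [Finset.coe_image]
  refine Set.InjOn.pairwise_image hinj.injOn |>.2 fun i hi j hj hij => ?_
  by_contra hmeet
  exact hS.isIndepSet hi hj hij ⟨hij, Set.not_disjoint_iff_nonempty_inter.1 hmeet⟩

theorem transversalNumber_le_of_not_graphMinor_top
    (hG : ¬GraphMinor (⊤ : SimpleGraph (Fin t)) G) (hE : IsBallHypergraph G E) {T : ℕ}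
    (hT : T = 64 * (ktDensity t * matchingNumber E)) :
    transversalNumber E ≤ 32 * T * t * (Nat.log 2 T + 1) := by
  obtain rfl | ⟨e, he⟩ := E.eq_empty_or_nonempty
  · simp [transversalNumber_empty]
  let ι := {e : Set V // Minimal (· ∈ E) e}
  have exists_minimal_subset (e) (he : e ∈ E) : ∃ m : ι, m.1 ⊆ e := by
    obtain ⟨m, hme, hm⟩ := E.toFinite.exists_le_minimal he
    exact ⟨⟨m, hm⟩, hme⟩
  have : Nonempty ι := (exists_minimal_subset e he).nonempty
  obtain ⟨X, hX, hmeet⟩ := exists_transversal_of_balls (B := fun m : ι => m.1) hG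
    (fun m => hE m.1 m.2.1)
    (fun m n h => Subtype.ext (h.antisymm (n.2.2 m.2.1 h))) rfl
  have hν : (intersectionGraph fun m : ι => m.1).indepNum ≤ matchingNumber E :=
    indepNum_intersectionGraph_le_matchingNumber (fun m => m.2.1) Subtype.val_injective
  refine (transversalNumber_le_card fun e he => ?_).trans (hX.trans ?_)
  · obtain ⟨m, hme⟩ := exists_minimal_subset e he
    obtain ⟨v, hv, hvm⟩ := hmeet m
    exact ⟨v, hv, hme hvm⟩
  · subst hT
    gcongr

end BallHypergraphs

section Logarithms

theorem natLog_two_le_two_mul_log {n : ℕ} (hn : 1 ≤ n) : (Nat.log 2 n : ℝ) ≤ 2 * Real.log n := by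
  have hpow : ((2 ^ Nat.log 2 n : ℕ) : ℝ) ≤ n := by
    exact_mod_cast Nat.pow_log_le_self 2 (by omega)
  have hlog := Real.log_le_log (by positivity) hpow
  rw [Nat.cast_pow, Real.log_pow] at hlog
  push_cast at hlog
  nlinarith [Real.log_two_gt_d9, (Nat.log 2 n).cast_nonneg (α := ℝ)]

theorem sqrt_natLog_two_add_one_le {n : ℕ} (hn : 2 ≤ n) :
    ((Nat.sqrt (Nat.log 2 n) + 1 : ℕ) : ℝ) ≤ 3 * Real.sqrt (Real.log n) := by
  have hpos : 1 ≤ Nat.sqrt (Nat.log 2 n) := Nat.sqrt_pos.2 (Nat.log_pos one_lt_two hn)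
  have hsqrt : (Nat.sqrt (Nat.log 2 n) : ℝ) ≤ 3 / 2 * Real.sqrt (Real.log n) := by
    calc (Nat.sqrt (Nat.log 2 n) : ℝ) ≤ Real.sqrt (Nat.log 2 n) := Real.nat_sqrt_le_real_sqrt
      _ ≤ Real.sqrt ((3 / 2) ^ 2 * Real.log n) := by
          have hlog₀ : 0 ≤ Real.log n := Real.log_natCast_nonneg n
          exact Real.sqrt_le_sqrt (by linarith [natLog_two_le_two_mul_log (by omega : 1 ≤ n)])
      _ = 3 / 2 * Real.sqrt (Real.log n) := by
          rw [Real.sqrt_mul (by norm_num), Real.sqrt_sq (by norm_num)]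
  have hpos' : (1 : ℝ) ≤ Nat.sqrt (Nat.log 2 n) := by exact_mod_cast hpos
  push_cast
  linarith

theorem natLog_ktDensity_add_one_le {t ν : ℕ} (ht : 2 ≤ t) (hν : 1 ≤ ν) :
    Nat.log 2 (64 * (ktDensity t * ν)) + 1 ≤ 28 * Nat.log 2 (t * ν) := by
  have hL : 1 ≤ Nat.log 2 (t * ν) := Nat.log_pos one_lt_two (by nlinarith)
  have hr : Nat.sqrt (Nat.log 2 t) + 1 ≤ t * ν :=
    ((Nat.sqrt_le_self _).trans_lt (Nat.log_lt_self 2 (by omega))).trans_le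
      (Nat.le_mul_of_pos_right t hν)
  have hlt : 64 * (ktDensity t * ν) < 2 ^ (2 * Nat.log 2 (t * ν) + 26) := by
    calc 64 * (ktDensity t * ν) = 2 ^ 24 * (t * ν * (Nat.sqrt (Nat.log 2 t) + 1)) := by
          rw [ktDensity]
          ring
      _ ≤ 2 ^ 24 * (t * ν * (t * ν)) := by gcongr
      _ < 2 ^ 24 * (2 ^ (Nat.log 2 (t * ν) + 1) * 2 ^ (Nat.log 2 (t * ν) + 1)) := by
          have := Nat.lt_pow_succ_log_self one_lt_two (t * ν)
          gcongr
      _ = 2 ^ (2 * Nat.log 2 (t * ν) + 26) := by ring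
  have := Nat.log_lt_of_lt_pow' (by omega) hlt
  omega

end Logarithms

theorem transversalNumber_le_natLog {V : Type*} [Fintype V] {G : SimpleGraph V} {E : Set (Set V)}
    {t : ℕ} (hG : ¬GraphMinor (⊤ : SimpleGraph (Fin t)) G) (hE : IsBallHypergraph G E)
    (ht : 2 ≤ t) (hν : 1 ≤ matchingNumber E) :
    transversalNumber E ≤ 2 ^ 29 * 28 * (t ^ 2 * (Nat.sqrt (Nat.log 2 t) + 1) *
      matchingNumber E * Nat.log 2 (t * matchingNumber E)) := by
  set ν := matchingNumber E
  calc transversalNumber E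
      ≤ 32 * (64 * (ktDensity t * ν)) * t * (Nat.log 2 (64 * (ktDensity t * ν)) + 1) :=
        transversalNumber_le_of_not_graphMinor_top hG hE rfl
    _ ≤ 32 * (64 * (ktDensity t * ν)) * t * (28 * Nat.log 2 (t * ν)) :=
        Nat.mul_le_mul_left _ (natLog_ktDensity_add_one_le ht hν)
    _ = 2 ^ 29 * 28 * (t ^ 2 * (Nat.sqrt (Nat.log 2 t) + 1) * ν * Nat.log 2 (t * ν)) := by
        rw [ktDensity]
        ring

theorem tau_le_nearlinear_Kt_general {V : Type*} [Fintype V] {G : SimpleGraph V}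
    {E : Set (Set V)} {t : ℕ} (hG : ¬GraphMinor (⊤ : SimpleGraph (Fin t)) G)
    (hE : IsBallHypergraph G E) :
    (transversalNumber E : ℝ) ≤ 2 ^ 29 * 168 * (t : ℝ) ^ 2 * Real.sqrt (Real.log t) *
      (matchingNumber E : ℝ) * Real.log ((t : ℝ) * (matchingNumber E : ℝ)) := by
  obtain rfl | hE₀ := E.eq_empty_or_nonempty
  · have hlog : 0 ≤ Real.log ((t : ℝ) * (matchingNumber (∅ : Set (Set V)) : ℝ)) := by
      exact_mod_cast Real.log_natCast_nonneg _
    rw [transversalNumber_empty, Nat.cast_zero]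
    positivity
  have : Nonempty V := let ⟨e, he⟩ := hE₀; let ⟨v, _⟩ := hE e he; ⟨v⟩
  have ht : 2 ≤ t := two_le_of_not_graphMinor_top hG
  have hν : 1 ≤ matchingNumber E := one_le_matchingNumber hE₀
  have hτ := transversalNumber_le_natLog hG hE ht hν
  have hr := sqrt_natLog_two_add_one_le ht
  have hlog := natLog_two_le_two_mul_log (Nat.mul_pos (zero_lt_two.trans_le ht) hν)
  set ν := matchingNumber E
  set r := Nat.sqrt (Nat.log 2 t) + 1
  calc (transversalNumber E : ℝ) ≤ 2 ^ 29 * 28 * (t ^ 2 * r * ν * Nat.log 2 (t * ν)) := by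
        exact_mod_cast hτ
    _ ≤ 2 ^ 29 * 28 * (t ^ 2 * (3 * Real.sqrt (Real.log t)) * ν * (2 * Real.log (t * ν))) := by
        gcongr
        exact_mod_cast hlog
    _ = _ := by ring

/-- There is an absolute constant `c > 0` such that for every integer `t ≥ 1`, every
graph `G` with no `K_t` minor, and every ball hypergraph `𝓗` of `G`,
`τ(𝓗) ≤ c·t²·√(log t)·ν(𝓗)·log(t·ν(𝓗))`. -/
theorem tau_le_nearlinear_Kt :
    ∃ c : ℝ, 0 < c ∧
      ∀ t : ℕ, 1 ≤ t →
        ∀ (V : Type) [Fintype V] (G : SimpleGraph V) (E : Set (Set V)),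
          ¬ GraphMinor (⊤ : SimpleGraph (Fin t)) G →
          IsBallHypergraph G E →
          (transversalNumber E : ℝ) ≤
            c * (t : ℝ) ^ 2 * Real.sqrt (Real.log t) * (matchingNumber E : ℝ) *
              Real.log ((t : ℝ) * (matchingNumber E : ℝ)) :=
  ⟨2 ^ 29 * 168, by norm_num, fun _ _ _ _ _ _ hG hE => tau_le_nearlinear_Kt_general hG hE⟩
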